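/- arXiv:math/0702229 — 6 statements merged into one kernel-verified Lean document; each statement's English description precedes it below -/
import Mathlib

section
/- Let f : ℂ → ℂ have rapid decay on ℂ*. Then for every natural number n there exists C > 0 such that for all t ∈ ℂ with |t| ≥ 1, |∫_ℂ ξ^{n+1}·f(ξ)·(1 - ξ/t)^{-1}·|ξ|^{-2} dA(ξ)| ≤ C. -/
/-!
The bound rests on the decomposition `(1 - ξ/t)⁻¹ = 1 - ξ/(ξ - t)`, which confines the dependence
on `t` to a translate of the singularity `1/|z|`. In real dimension two that singularity is locally
integrable, with an integral over the unit disc about `t` that is independent of `t`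
(`integrable_truncInvNorm`); outside this disc the factor `1/|ξ - t|` is at most `1`
(`norm_kernel_le`). Rapid decay makes the remaining factor of the integrand at most a multiple of
`(1 + |ξ|)⁻³` (`HasRapidDecay.exists_weight_bound`), which is both integrable and bounded. Hence
the integrand is dominated by `2K (1 + |ξ|)⁻³ + K φ(ξ - t)` with `φ` integrable, and translation
invariance of Lebesgue measure makes the integral of this majorant independent of `t`.
-/

open MeasureTheory

noncomputable section

/-- `f : ℂ → ℂ` has rapid decay on `ℂ*`: it is continuous away from `0` and decays
faster than every power of `|ξ|` at `0` and than every power of `|ξ|⁻¹` at infinity. -/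
def HasRapidDecay (f : ℂ → ℂ) : Prop :=
  ContinuousOn f {0}ᶜ ∧
    ∀ N : ℕ, ∃ C : ℝ, 0 < C ∧
      (∀ ξ : ℂ, ξ ≠ 0 → ‖ξ‖ ≤ 1 → ‖f ξ‖ ≤ C * ‖ξ‖ ^ N) ∧
      (∀ ξ : ℂ, 1 ≤ ‖ξ‖ → ‖f ξ‖ ≤ C * ‖ξ‖⁻¹ ^ N)

/-- The function `z ↦ |z|⁻¹` cut off to the closed unit disc (with value `0` at `0`). -/
def truncInvNorm : ℂ → ℝ :=
  (Metric.closedBall (0 : ℂ) 1).indicator fun z => ‖z‖⁻¹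

lemma truncInvNorm_nonneg (z : ℂ) : 0 ≤ truncInvNorm z :=
  Set.indicator_nonneg (fun _ _ => by positivity) z

lemma integrable_truncInvNorm : Integrable truncInvNorm := by
  have hloc : LocallyIntegrable (fun z : ℂ => ‖z‖⁻¹) volume := by
    refine locallyIntegrable_of_norm_le_rpow (C := 1) (α := 1) ?_ ?_ ?_ ?_
    · simp [Complex.finrank_real_complex]
    · simp [Complex.finrank_real_complex]
    · exact Filter.Eventually.of_forall fun z => by simp [Real.rpow_neg_one]
    · exact (measurable_norm.inv).aestronglyMeasurable
  exact (integrable_indicator_iff Metric.isClosed_closedBall.measurableSet).2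
    (hloc.integrableOn_isCompact (isCompact_closedBall 0 1))

lemma norm_kernel_le (ξ t : ℂ) (ht : t ≠ 0) :
    ‖(1 - ξ / t)⁻¹‖ ≤ (1 + ‖ξ‖) * (2 + truncInvNorm (ξ - t)) := by
  have hφ := truncInvNorm_nonneg (ξ - t)
  -- At `ξ = t` the left-hand side is `0⁻¹ = 0`.
  rcases eq_or_ne ξ t with rfl | hne
  · rw [div_self ht]
    simp only [sub_self, inv_zero, norm_zero] at *
    positivity
  have hsub : ξ - t ≠ 0 := sub_ne_zero.2 hne
  have hsub' : t - ξ ≠ 0 := sub_ne_zero.2 hne.symm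
  have hdecomp : (1 - ξ / t)⁻¹ = 1 - ξ * (ξ - t)⁻¹ := by
    rw [one_sub_div ht, inv_div, ← neg_sub t ξ, inv_neg]
    field_simp
    ring
  have h1 : ‖(1 - ξ / t)⁻¹‖ ≤ 1 + ‖ξ‖ * ‖ξ - t‖⁻¹ := by
    rw [hdecomp]
    refine (norm_sub_le _ _).trans ?_
    simp
  have h2 : ‖ξ - t‖⁻¹ ≤ 1 + truncInvNorm (ξ - t) := by
    by_cases hmem : ξ - t ∈ Metric.closedBall (0 : ℂ) 1
    · simp [truncInvNorm, Set.indicator_of_mem hmem]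
    · have : 1 < ‖ξ - t‖ := by simpa using hmem
      linarith [inv_le_one_of_one_le₀ this.le]
  nlinarith [mul_le_mul_of_nonneg_left h2 (norm_nonneg ξ), norm_nonneg ξ]

/-- The part of the integrand not involving `t`, with a spare factor `1 + |ξ|` that absorbs the
growth of the kernel. The exponent `3` exceeds the real dimension of `ℂ`. -/
lemma HasRapidDecay.exists_weight_bound {f : ℂ → ℂ} (hf : HasRapidDecay f) (n : ℕ) :
    ∃ K : ℝ, 0 < K ∧ ∀ ξ : ℂ,
      ‖ξ‖ ^ (n + 1) * ‖f ξ‖ * (‖ξ‖ ^ 2)⁻¹ * (1 + ‖ξ‖) ≤ K * (1 + ‖ξ‖) ^ (-3 : ℝ) := by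
  obtain ⟨C₀, hC₀, h₀, -⟩ := hf.2 1
  obtain ⟨C₁, hC₁, -, h₁⟩ := hf.2 (n + 3)
  refine ⟨16 * (C₀ + C₁), by positivity, fun ξ => ?_⟩
  have hpow : (1 + ‖ξ‖) ^ (-3 : ℝ) = ((1 + ‖ξ‖) ^ 3)⁻¹ := by
    rw [Real.rpow_neg (by positivity)]
    norm_cast
  rw [hpow, ← div_eq_mul_inv (16 * (C₀ + C₁)), le_div_iff₀ (by positivity)]
  rcases eq_or_ne ξ 0 with rfl | hξ
  · simp only [norm_zero, ne_eq, Nat.add_eq_zero_iff, one_ne_zero, and_false, not_false_eq_true,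
      zero_pow, zero_mul]
    positivity
  have hr : 0 < ‖ξ‖ := norm_pos_iff.2 hξ
  rcases le_total ‖ξ‖ 1 with hle | hge
  · -- Near `0` one power of decay makes the total exponent `n + 1 + 1 - 2` nonnegative.
    have hf' := h₀ ξ hξ hle
    generalize ‖ξ‖ = r at *
    calc r ^ (n + 1) * ‖f ξ‖ * (r ^ 2)⁻¹ * (1 + r) * (1 + r) ^ 3
        ≤ r ^ (n + 1) * (C₀ * r ^ 1) * (r ^ 2)⁻¹ * (1 + r) * (1 + r) ^ 3 := by gcongr
      _ = C₀ * r ^ n * (1 + r) ^ 4 := by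
          field_simp
          ring
      _ ≤ C₀ * 1 * (1 + 1) ^ 4 := by
          gcongr
          exact pow_le_one₀ hr.le hle
      _ ≤ 16 * (C₀ + C₁) := by linarith
  · -- At infinity `1 + r ≤ 2 r`, and `n + 1 - 2 + 4 = n + 3` powers of decay are needed.
    have hf' := h₁ ξ hge
    generalize ‖ξ‖ = r at *
    calc r ^ (n + 1) * ‖f ξ‖ * (r ^ 2)⁻¹ * (1 + r) * (1 + r) ^ 3
        ≤ r ^ (n + 1) * (C₁ * r⁻¹ ^ (n + 3)) * (r ^ 2)⁻¹ * (r + r) * (r + r) ^ 3 := by gcongr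
      _ = 16 * C₁ := by
          rw [inv_pow]
          field_simp
          ring
      _ ≤ 16 * (C₀ + C₁) := by linarith

theorem stmt_1 (f : ℂ → ℂ) (hf : HasRapidDecay f) :
    ∀ n : ℕ, ∃ C : ℝ, 0 < C ∧ ∀ t : ℂ, 1 ≤ ‖t‖ →
      ‖∫ ξ : ℂ, ξ ^ (n + 1) * f ξ * (1 - ξ / t)⁻¹ * ((‖ξ‖ ^ 2 : ℝ) : ℂ)⁻¹‖ ≤ C := by
  intro n
  obtain ⟨K, hK, hbound⟩ := hf.exists_weight_bound n
  have hw : Integrable (fun ξ : ℂ => (1 + ‖ξ‖) ^ (-3 : ℝ)) :=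
    integrable_one_add_norm (by norm_num [Complex.finrank_real_complex])
  have hw0 : 0 ≤ ∫ ξ : ℂ, (1 + ‖ξ‖) ^ (-3 : ℝ) := integral_nonneg fun ξ => by positivity
  have hφ0 : 0 ≤ ∫ z, truncInvNorm z := integral_nonneg truncInvNorm_nonneg
  refine ⟨2 * K * (∫ ξ : ℂ, (1 + ‖ξ‖) ^ (-3 : ℝ)) + K * (∫ z, truncInvNorm z) + 1,
    by positivity, fun t ht => ?_⟩
  have ht0 : t ≠ 0 := norm_pos_iff.1 (by linarith)
  have hφ : Integrable (fun ξ => K * truncInvNorm (ξ - t)) :=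
    (integrable_truncInvNorm.comp_sub_right t).const_mul K
  have hmaj : ∀ ξ : ℂ, ‖ξ ^ (n + 1) * f ξ * (1 - ξ / t)⁻¹ * ((‖ξ‖ ^ 2 : ℝ) : ℂ)⁻¹‖
      ≤ 2 * K * (1 + ‖ξ‖) ^ (-3 : ℝ) + K * truncInvNorm (ξ - t) := by
    intro ξ
    have hφ' := truncInvNorm_nonneg (ξ - t)
    have hw1 : (1 + ‖ξ‖) ^ (-3 : ℝ) ≤ 1 :=
      Real.rpow_le_one_of_one_le_of_nonpos (by linarith [norm_nonneg ξ]) (by norm_num)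
    have hnorm : ‖((‖ξ‖ ^ 2 : ℝ) : ℂ)⁻¹‖ = (‖ξ‖ ^ 2)⁻¹ := by
      rw [norm_inv, Complex.norm_real, Real.norm_of_nonneg (by positivity)]
    rw [norm_mul, norm_mul, norm_mul, norm_pow, hnorm]
    calc ‖ξ‖ ^ (n + 1) * ‖f ξ‖ * ‖(1 - ξ / t)⁻¹‖ * (‖ξ‖ ^ 2)⁻¹
        ≤ ‖ξ‖ ^ (n + 1) * ‖f ξ‖ * ((1 + ‖ξ‖) * (2 + truncInvNorm (ξ - t))) * (‖ξ‖ ^ 2)⁻¹ := by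
          gcongr
          exact norm_kernel_le ξ t ht0
      _ = ‖ξ‖ ^ (n + 1) * ‖f ξ‖ * (‖ξ‖ ^ 2)⁻¹ * (1 + ‖ξ‖) * (2 + truncInvNorm (ξ - t)) := by ring
      _ ≤ K * (1 + ‖ξ‖) ^ (-3 : ℝ) * (2 + truncInvNorm (ξ - t)) := by
          exact mul_le_mul_of_nonneg_right (hbound ξ) (by positivity)
      _ = 2 * K * (1 + ‖ξ‖) ^ (-3 : ℝ)
            + K * ((1 + ‖ξ‖) ^ (-3 : ℝ) * truncInvNorm (ξ - t)) := by ring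
      _ ≤ 2 * K * (1 + ‖ξ‖) ^ (-3 : ℝ) + K * truncInvNorm (ξ - t) := by
          gcongr
          exact mul_le_of_le_one_left hφ' hw1
  refine (norm_integral_le_of_norm_le ((hw.const_mul (2 * K)).add hφ)
    (Filter.Eventually.of_forall hmaj)).trans ?_
  have hint : ∫ ξ : ℂ, (2 * K * (1 + ‖ξ‖) ^ (-3 : ℝ) + K * truncInvNorm (ξ - t))
      = 2 * K * (∫ ξ : ℂ, (1 + ‖ξ‖) ^ (-3 : ℝ)) + K * (∫ z, truncInvNorm z) := by
    rw [integral_add (hw.const_mul (2 * K)) hφ, integral_const_mul, integral_const_mul,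
      integral_sub_right_eq_self truncInvNorm t]
  exact hint.le.trans (by linarith)
end
end

section
/- Let g : ℂ → ℂ be continuously real-differentiable on ℂ \ {0}. Suppose that the Wirtinger derivative ∂g/∂ξ is Lebesgue-integrable on ℂ, and that r·sup_{|ξ|=r} |g(ξ)| tends to 0 both as r → 0 and as r → ∞. Then ∫_ℂ (∂g/∂ξ)(ξ) dA(ξ) = 0. -/
/-!
In polar coordinates `ξ = r e^{iθ}` the Wirtinger derivative, multiplied by the Jacobian `r`, is a
divergence:
`2 r ∂g/∂ξ = ∂_r (r e^{-iθ} g) + ∂_θ (-i e^{-iθ} g)`.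
The divergence theorem on the rectangle `[a, b] × [-π, π]` therefore expresses the integral of
`∂g/∂ξ` over the annulus `a ≤ |ξ| ≤ b` through the boundary terms. The two sides `θ = ±π` cancel
by periodicity, and what remains is half the difference of the circle integrals
`∫ r e^{-iθ} g(r e^{iθ}) dθ` at `r = b` and `r = a` (`setIntegral_annulus_wirtinger`). Each of these
is at most `2π r sup_{|ξ| = r} |g|`, hence tends to zero as `b → ∞` and `a → 0`
(`tendsto_circleFlux`), while the annuli exhaust `ℂ \ {0}`.
-/

open MeasureTheory

noncomputable section

/-- The holomorphic Wirtinger derivative `∂f/∂ξ = (1/2)(∂f/∂x - i·∂f/∂y)`,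
expressed through the real Fréchet derivative `f'`. -/
def wirtinger (f' : ℂ → ℂ →L[ℝ] ℂ) (ξ : ℂ) : ℂ :=
  (1 / 2 : ℂ) * (f' ξ 1 - Complex.I * f' ξ Complex.I)

open Filter Topology Set Real

/-- The polar coordinate map `(r, θ) ↦ r e^{iθ}` on all of `ℝ × ℝ`. -/
def polarMap (p : ℝ × ℝ) : ℂ := (p.1 : ℂ) * Complex.exp ((p.2 : ℂ) * Complex.I)

/-- The radial component `r e^{-iθ} g(r e^{iθ})` of the field whose divergence is
`2 r ∂g/∂ξ`. -/
def radialField (g : ℂ → ℂ) (p : ℝ × ℝ) : ℂ :=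
  (p.1 : ℂ) * (Complex.exp (-((p.2 : ℂ) * Complex.I)) * g (polarMap p))

/-- The angular component `-i e^{-iθ} g(r e^{iθ})` of the field whose divergence is
`2 r ∂g/∂ξ`. -/
def angularField (g : ℂ → ℂ) (p : ℝ × ℝ) : ℂ :=
  (-Complex.I) * (Complex.exp (-((p.2 : ℂ) * Complex.I)) * g (polarMap p))

/-- The flux of `radialField g` through the circle of radius `r`. -/
def circleFlux (g : ℂ → ℂ) (r : ℝ) : ℂ := ∫ θ in (-π)..π, radialField g (r, θ)

lemma norm_polarMap {p : ℝ × ℝ} (hp : 0 ≤ p.1) : ‖polarMap p‖ = p.1 := by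
  simp [polarMap, Complex.norm_exp_ofReal_mul_I, abs_of_nonneg hp]

lemma polarMap_ne_zero {p : ℝ × ℝ} (hp : 0 < p.1) : polarMap p ≠ 0 := by
  rw [← norm_pos_iff, norm_polarMap hp.le]; exact hp

lemma continuous_polarMap : Continuous polarMap := by
  unfold polarMap; fun_prop

lemma norm_radialField (g : ℂ → ℂ) {p : ℝ × ℝ} (hp : 0 ≤ p.1) :
    ‖radialField g p‖ = ‖polarMap p‖ * ‖g (polarMap p)‖ := by
  have h : ‖Complex.exp (-((p.2 : ℂ) * Complex.I))‖ = 1 := by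
    rw [← neg_mul, ← Complex.ofReal_neg, Complex.norm_exp_ofReal_mul_I]
  rw [norm_polarMap hp, radialField, norm_mul, norm_mul, h, one_mul, Complex.norm_real,
    Real.norm_of_nonneg hp]

/-- The two components are differentiable away from the axis `r = 0`, with divergence
`2 r ∂g/∂ξ`. -/
lemma exists_hasFDerivAt_fields {g : ℂ → ℂ} {g' : ℂ → ℂ →L[ℝ] ℂ} {p : ℝ × ℝ}
    (hg : HasFDerivAt g (g' (polarMap p)) (polarMap p)) :
    ∃ F' H' : ℝ × ℝ →L[ℝ] ℂ, HasFDerivAt (radialField g) F' p ∧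
      HasFDerivAt (angularField g) H' p ∧
      F' (1, 0) + H' (0, 1) = 2 * ((p.1 : ℂ) * wirtinger g' (polarMap p)) := by
  have h1 : HasFDerivAt (fun q : ℝ × ℝ => (q.1 : ℂ))
      (Complex.ofRealCLM.comp (ContinuousLinearMap.fst ℝ ℝ ℝ)) p :=
    Complex.ofRealCLM.hasFDerivAt.comp p hasFDerivAt_fst
  have h2 : HasFDerivAt (fun q : ℝ × ℝ => (q.2 : ℂ))
      (Complex.ofRealCLM.comp (ContinuousLinearMap.snd ℝ ℝ ℝ)) p :=
    Complex.ofRealCLM.hasFDerivAt.comp p hasFDerivAt_snd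
  have hP : HasFDerivAt polarMap _ p := h1.mul (h2.mul_const Complex.I).cexp
  have hU := (h2.mul_const Complex.I).neg.cexp
  have hK := hU.mul (hg.comp p hP)
  refine ⟨_, _, h1.mul hK, hK.const_mul (-Complex.I), ?_⟩
  set E := Complex.exp ((p.2 : ℂ) * Complex.I) with hE
  set U := Complex.exp (-((p.2 : ℂ) * Complex.I)) with hU'
  have hUE : U * E = 1 := by rw [hE, hU', ← Complex.exp_add]; simp
  -- Real-linearity of `g'` in the real and imaginary parts of `e^{iθ}`.
  have hlin : ∀ z : ℂ, g' (polarMap p) z =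
      z.re * g' (polarMap p) 1 + z.im * g' (polarMap p) Complex.I := by
    intro z
    conv_lhs => rw [← Complex.re_add_im z]
    rw [show (z.re : ℂ) + z.im * Complex.I = z.re • (1 : ℂ) + z.im • Complex.I by simp]
    rw [map_add, map_smul, map_smul]; simp
  have hEc : E = (E.re : ℂ) + E.im * Complex.I := (Complex.re_add_im E).symm
  set D := g' (polarMap p)
  have hD1 := hlin E
  have hD2 : D (p.1 * (E * Complex.I)) = p.1 * (-E.im * D 1 + E.re * D Complex.I) := by
    rw [hlin]; simp; ring
  simp only [wirtinger]
  simp [← hU', hD1, hD2]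
  linear_combination (p.1 * (D 1 - Complex.I * D Complex.I)) * hUE
    - (p.1 * U * (D 1 - Complex.I * D Complex.I)) * hEc
    + (p.1 * U * E.im * D Complex.I + U * g (polarMap p)) * Complex.I_sq

lemma continuousOn_wirtinger {g' : ℂ → ℂ →L[ℝ] ℂ} (hcont : ContinuousOn g' {0}ᶜ) :
    ContinuousOn (wirtinger g') {0}ᶜ := by
  unfold wirtinger
  fun_prop

/-- The integral over an annulus, in polar coordinates. -/
lemma setIntegral_annulus (f : ℂ → ℂ) {a b : ℝ} (ha : 0 < a) :
    ∫ ξ in {ξ : ℂ | a ≤ ‖ξ‖ ∧ ‖ξ‖ ≤ b}, f ξ =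
      ∫ p in Icc (a, -π) (b, π), (p.1 : ℂ) * f (polarMap p) := by
  have hA : MeasurableSet {ξ : ℂ | a ≤ ‖ξ‖ ∧ ‖ξ‖ ≤ b} :=
    (measurableSet_le measurable_const measurable_norm).inter
      (measurableSet_le measurable_norm measurable_const)
  have hsub : Icc a b ×ˢ Ioo (-π) π ⊆ polarCoord.target := by
    rintro ⟨r, θ⟩ ⟨hr, hθ⟩
    exact ⟨ha.trans_le hr.1, hθ⟩
  have hae : (Icc a b ×ˢ Ioo (-π) π : Set (ℝ × ℝ)) =ᵐ[volume] Icc (a, -π) (b, π) := by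
    rw [← Icc_prod_Icc]
    exact Measure.set_prod_ae_eq (ae_eq_refl _) Ioo_ae_eq_Icc
  rw [← integral_indicator hA, ← Complex.integral_comp_polarCoord_symm,
    ← setIntegral_congr_set hae, ← inter_eq_self_of_subset_right hsub,
    ← setIntegral_indicator (measurableSet_Icc.prod measurableSet_Ioo)]
  refine setIntegral_congr_fun polarCoord.open_target.measurableSet ?_
  rintro ⟨r, θ⟩ ⟨hr, hθ⟩
  have hr' : (0 : ℝ) < r := hr
  have hP : Complex.polarCoord.symm (r, θ) = polarMap (r, θ) := by
    simp [polarMap, Complex.exp_mul_I]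
  simp only [hP]
  by_cases h : a ≤ r ∧ r ≤ b
  · rw [indicator_of_mem, indicator_of_mem]
    · simp
    · exact ⟨h, hθ⟩
    · simpa [norm_polarMap (p := (r, θ)) hr'.le] using h
  · rw [indicator_of_notMem, indicator_of_notMem, smul_zero]
    · exact fun h' => h h'.1
    · simpa [norm_polarMap (p := (r, θ)) hr'.le] using h

lemma setIntegral_annulus_wirtinger {g : ℂ → ℂ} {g' : ℂ → ℂ →L[ℝ] ℂ}
    (hderiv : ∀ ξ : ℂ, ξ ≠ 0 → HasFDerivAt g (g' ξ) ξ)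
    (hcont : ContinuousOn g' {0}ᶜ) {a b : ℝ} (ha : 0 < a) (hab : a ≤ b) :
    2 * ∫ ξ in {ξ : ℂ | a ≤ ‖ξ‖ ∧ ‖ξ‖ ≤ b}, wirtinger g' ξ =
      circleFlux g b - circleFlux g a := by
  have hpos : ∀ p ∈ Icc (a, -π) (b, π), 0 < p.1 := fun p hp => ha.trans_le hp.1.1
  have hex : ∀ p : ℝ × ℝ, ∃ F' H' : ℝ × ℝ →L[ℝ] ℂ, 0 < p.1 →
      HasFDerivAt (radialField g) F' p ∧ HasFDerivAt (angularField g) H' p ∧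
      F' (1, 0) + H' (0, 1) = 2 * ((p.1 : ℂ) * wirtinger g' (polarMap p)) := by
    intro p
    by_cases hp : 0 < p.1
    · obtain ⟨F', H', h⟩ := exists_hasFDerivAt_fields (hderiv _ (polarMap_ne_zero hp))
      exact ⟨F', H', fun _ => h⟩
    · exact ⟨0, 0, fun h => absurd h hp⟩
  choose F' H' hFH using hex
  have hdiv : EqOn (fun p => F' p (1, 0) + H' p (0, 1))
      (fun p => 2 * ((p.1 : ℂ) * wirtinger g' (polarMap p))) (Icc (a, -π) (b, π)) :=
    fun p hp => (hFH p (hpos p hp)).2.2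
  have hcW : ContinuousOn (fun p : ℝ × ℝ => 2 * ((p.1 : ℂ) * wirtinger g' (polarMap p)))
      (Icc (a, -π) (b, π)) := by
    refine continuousOn_const.mul (ContinuousOn.mul (by fun_prop) ?_)
    exact (continuousOn_wirtinger hcont).comp continuous_polarMap.continuousOn
      fun p hp => polarMap_ne_zero (hpos p hp)
  have hInt : IntegrableOn (fun p => F' p (1, 0) + H' p (0, 1)) (Icc (a, -π) (b, π)) :=
    (hcW.integrableOn_compact isCompact_Icc).congr_fun hdiv.symm measurableSet_Icc
  have key := integral_divergence_prod_Icc_of_hasFDerivAt_of_le (radialField g) (angularField g)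
    F' H' (a, -π) (b, π) ⟨hab, by linarith [pi_pos]⟩
    (fun p hp => (hFH p (hpos p hp)).1.continuousAt.continuousWithinAt)
    (fun p hp => (hFH p (hpos p hp)).2.1.continuousAt.continuousWithinAt)
    (fun p hp => (hFH p (ha.trans hp.1.1)).1)
    (fun p hp => (hFH p (ha.trans hp.1.1)).2.1) hInt
  have hper : ∀ r : ℝ, angularField g (r, π) = angularField g (r, -π) := by
    intro r
    simp [angularField, polarMap, Complex.exp_neg, Complex.exp_pi_mul_I]
  rw [setIntegral_congr_fun measurableSet_Icc hdiv, integral_const_mul,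
    ← setIntegral_annulus _ ha] at key
  simpa [hper, circleFlux] using key

/-- The circle flux tends to zero along a filter `l` of radii as soon as `|ξ| |g ξ|` does so
uniformly in the argument, which is what convergence along `comap norm l` says. -/
lemma tendsto_circleFlux {g : ℂ → ℂ} {l : Filter ℝ} (hl : ∀ᶠ r in l, 0 ≤ r)
    (h : Tendsto (fun ξ : ℂ => ‖ξ‖ * ‖g ξ‖) (comap norm l) (𝓝 0)) :
    Tendsto (circleFlux g) l (𝓝 0) := by
  rw [Metric.tendsto_nhds]
  intro ε hε
  have hδ : 0 < ε / (4 * π) := by positivity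
  have h' := eventually_comap.1 (h.eventually (gt_mem_nhds hδ))
  filter_upwards [hl, h'] with r hr hr'
  have hb : ‖circleFlux g r‖ ≤ ε / (4 * π) * |π - -π| := by
    refine intervalIntegral.norm_integral_le_of_norm_le_const fun θ _ => ?_
    rw [norm_radialField g (p := (r, θ)) hr]
    exact (hr' _ (norm_polarMap (p := (r, θ)) hr)).le
  rw [dist_zero_right]
  refine hb.trans_lt ?_
  rw [sub_neg_eq_add, abs_of_pos (by positivity)]
  have : ε / (4 * π) * (π + π) = ε / 2 := by field_simp; ring
  linarith

theorem stmt_4 (g : ℂ → ℂ) (g' : ℂ → ℂ →L[ℝ] ℂ)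
    (hderiv : ∀ ξ : ℂ, ξ ≠ 0 → HasFDerivAt g (g' ξ) ξ)
    (hcont : ContinuousOn g' {0}ᶜ)
    (hint : Integrable (fun ξ : ℂ => wirtinger g' ξ))
    (h0 : Filter.Tendsto (fun ξ : ℂ => ‖ξ‖ * ‖g ξ‖) (nhdsWithin 0 {0}ᶜ) (nhds 0))
    (hinf : Filter.Tendsto (fun ξ : ℂ => ‖ξ‖ * ‖g ξ‖) (Bornology.cobounded ℂ) (nhds 0)) :
    ∫ ξ : ℂ, wirtinger g' ξ = 0 := by
  have ht0 : Tendsto (circleFlux g) (𝓝[>] 0) (𝓝 0) :=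
    tendsto_circleFlux (eventually_mem_nhdsWithin.mono fun r hr => le_of_lt hr)
      (by rwa [comap_norm_nhdsGT_zero])
  have htinf : Tendsto (circleFlux g) atTop (𝓝 0) :=
    tendsto_circleFlux (eventually_ge_atTop 0) (by rwa [comap_norm_atTop])
  let A : ℕ → Set ℂ := fun n => {ξ : ℂ | 1 / ((n : ℝ) + 1) ≤ ‖ξ‖ ∧ ‖ξ‖ ≤ (n : ℝ) + 1}
  have hA : ∀ n, MeasurableSet (A n) := fun n =>
    (measurableSet_le measurable_const measurable_norm).inter
      (measurableSet_le measurable_norm measurable_const)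
  have hmono : Monotone A := by
    intro m n hmn ξ hξ
    have : (m : ℝ) ≤ n := by exact_mod_cast hmn
    exact ⟨(one_div_le_one_div_of_le (by positivity) (by linarith)).trans hξ.1,
      hξ.2.trans (by linarith)⟩
  have hU : ⋃ n, A n = {0}ᶜ := by
    ext ξ
    simp only [mem_iUnion, mem_compl_iff, mem_singleton_iff]
    constructor
    · rintro ⟨n, hn, -⟩ rfl
      have : (0 : ℝ) < 1 / ((n : ℝ) + 1) := by positivity
      rw [norm_zero] at hn
      linarith
    · intro hξ
      obtain ⟨m, hm⟩ := exists_nat_one_div_lt (norm_pos_iff.2 hξ)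
      obtain ⟨k, hk⟩ := exists_nat_ge ‖ξ‖
      have hξm : ξ ∈ {ξ : ℂ | 1 / ((m : ℝ) + 1) ≤ ‖ξ‖} := hm.le
      refine ⟨max m k, (one_div_le_one_div_of_le (by positivity) ?_).trans hm.le, hk.trans ?_⟩
      · gcongr; exact le_max_left _ _
      · have : (k : ℝ) ≤ (max m k : ℕ) := by exact_mod_cast le_max_right _ _
        linarith
  have hlim := tendsto_setIntegral_of_monotone hA hmono (hint.integrableOn (s := ⋃ n, A n))
  rw [hU, restrict_compl_singleton] at hlim
  have hann : ∀ n : ℕ, 2 * ∫ ξ in A n, wirtinger g' ξ =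
      circleFlux g ((n : ℝ) + 1) - circleFlux g (1 / ((n : ℝ) + 1)) := by
    intro n
    have hn : (1 : ℝ) ≤ (n : ℝ) + 1 := by linarith [n.cast_nonneg (α := ℝ)]
    exact setIntegral_annulus_wirtinger hderiv hcont (by positivity)
      ((div_le_one₀ (by positivity)).2 hn |>.trans hn)
  have hzero : Tendsto (fun n : ℕ => 2 * ∫ ξ in A n, wirtinger g' ξ) atTop (𝓝 (0 - 0)) := by
    simp_rw [hann]
    refine (htinf.comp (tendsto_atTop_add_const_right _ _ tendsto_natCast_atTop_atTop)).sub
      (ht0.comp (tendsto_nhdsWithin_iff.2 ⟨tendsto_one_div_add_atTop_nhds_zero_nat, ?_⟩))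
    exact Eventually.of_forall fun n => by simp only [mem_Ioi]; positivity
  have h2 := tendsto_nhds_unique (hlim.const_mul 2) hzero
  simpa using h2
end
end

section
/- Let f : ℂ → ℂ have rapid decay with derivative on ℂ*. Then for every natural number k: ∫_ℂ ξ^{k+1}·(∂f/∂ξ)(ξ)·|ξ|^{-2} dA(ξ) = -k·∫_ℂ ξ^{k}·f(ξ)·|ξ|^{-2} dA(ξ), where ∂f/∂ξ is the holomorphic Wirtinger derivative. -/
/-!
Put `g ξ = ξ ^ k * f ξ / conj ξ`. Since `1 / conj ξ` is killed by `∂/∂ξ`, away from the origin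
`∂g/∂ξ = k * ξ ^ (k - 1) * f / conj ξ + ξ ^ k * (∂f/∂ξ) / conj ξ`, and because
`|ξ|² = ξ * conj ξ` the identity says precisely that `∫ ∂g/∂ξ = 0`. The rapid decay of `f` at `0`
makes `g` differentiable at the origin too, with zero derivative, so `g` has directional
derivatives on all of `ℂ` (`hasLineDerivAt_weight_mul`). The rapid decay of `f` and `f'` makes `g`
and these derivatives integrable (`integrable_weight_mul`), hence integration by parts against the
constant function `1` shows that each directional derivative has integral zero
(`integral_weightDeriv`); no cut-off around the singularity is needed.
-/

open MeasureTheory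

noncomputable section

/-- `f : ℂ → ℂ` has rapid decay with derivative on `ℂ*`: it is continuously real
differentiable away from `0` (with real Fréchet derivative `f'`), and both `f` and `f'`
decay faster than every power of `|ξ|` at `0` and of `|ξ|⁻¹` at infinity. -/
def HasRapidDecayDeriv (f : ℂ → ℂ) (f' : ℂ → ℂ →L[ℝ] ℂ) : Prop :=
  (∀ ξ : ℂ, ξ ≠ 0 → HasFDerivAt f (f' ξ) ξ) ∧ ContinuousOn f' {0}ᶜ ∧
    ∀ N : ℕ, ∃ C : ℝ, 0 < C ∧
      (∀ ξ : ℂ, ξ ≠ 0 → ‖ξ‖ ≤ 1 → ‖f ξ‖ ≤ C * ‖ξ‖ ^ N ∧ ‖f' ξ‖ ≤ C * ‖ξ‖ ^ N) ∧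
      (∀ ξ : ℂ, 1 ≤ ‖ξ‖ → ‖f ξ‖ ≤ C * ‖ξ‖⁻¹ ^ N ∧ ‖f' ξ‖ ≤ C * ‖ξ‖⁻¹ ^ N)

open ComplexConjugate Topology

/-- The weight `ξ ^ a / (conj ξ) ^ b`. For `b ≥ 1` its value at `0` is `0`, by the convention
`0⁻¹ = 0`. -/
def weight (a b : ℕ) (ξ : ℂ) : ℂ := ξ ^ a * (conj ξ ^ b)⁻¹

lemma weight_zero (a b : ℕ) (hb : b ≠ 0) : weight a b 0 = 0 := by
  simp [weight, hb]

lemma norm_weight (a b : ℕ) (ξ : ℂ) : ‖weight a b ξ‖ = ‖ξ‖ ^ a * (‖ξ‖ ^ b)⁻¹ := by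
  simp [weight]

lemma continuousOn_weight (a b : ℕ) : ContinuousOn (weight a b) {0}ᶜ := by
  unfold weight
  refine (continuous_pow a).continuousOn.mul (ContinuousOn.inv₀ ?_ ?_)
  · exact (Complex.continuous_conj.pow b).continuousOn
  · intro x hx
    have : x ≠ 0 := hx
    simp [this]

/-- A function continuous off the origin, bounded on the punctured unit disc and `O(|ξ|⁻³)` at
infinity is integrable on the plane; its value at the origin plays no role. -/
lemma integrable_of_bounds {h : ℂ → ℂ} (hc : ContinuousOn h {0}ᶜ) {C : ℝ}
    (h0 : ∀ ξ : ℂ, ξ ≠ 0 → ‖ξ‖ ≤ 1 → ‖h ξ‖ ≤ C)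
    (h1 : ∀ ξ : ℂ, 1 ≤ ‖ξ‖ → ‖h ξ‖ ≤ C * (‖ξ‖ ^ 3)⁻¹) : Integrable h := by
  have hC : 0 ≤ C := (norm_nonneg _).trans (h0 1 one_ne_zero (by simp))
  have hdom : Integrable (fun ξ : ℂ => 8 * C * (1 + ‖ξ‖) ^ (-(3 : ℝ))) :=
    (integrable_one_add_norm (by simp [Complex.finrank_real_complex]; norm_num)).const_mul _
  have hae : ∀ᵐ ξ : ℂ, ξ ∈ ({0}ᶜ : Set ℂ) :=
    compl_mem_ae_iff.2 (measure_singleton 0)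
  refine hdom.mono' ?_ ?_
  · rw [← Measure.restrict_eq_self_of_ae_mem hae]
    exact hc.aestronglyMeasurable (measurableSet_singleton 0).compl
  · filter_upwards [hae] with ξ hξ
    have hp : 0 < 1 + ‖ξ‖ := by positivity
    have hrp : (1 + ‖ξ‖) ^ (-(3 : ℝ)) = ((1 + ‖ξ‖) ^ 3)⁻¹ := by
      rw [Real.rpow_neg hp.le]; norm_cast
    rw [hrp, ← div_eq_mul_inv, le_div_iff₀ (by positivity)]
    rcases le_total ‖ξ‖ 1 with hle | hle
    · calc ‖h ξ‖ * (1 + ‖ξ‖) ^ 3 ≤ C * (1 + 1) ^ 3 := by gcongr; exact h0 ξ hξ hle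
        _ = 8 * C := by ring
    · have : 0 < ‖ξ‖ := by linarith
      calc ‖h ξ‖ * (1 + ‖ξ‖) ^ 3 ≤ (C * (‖ξ‖ ^ 3)⁻¹) * (‖ξ‖ + ‖ξ‖) ^ 3 := by
            gcongr; exact h1 ξ hle
        _ = 8 * C := by field_simp; ring

/-- A weight times a function continuous off the origin and rapidly decaying at `0` and at infinity
is integrable. -/
lemma integrable_weight_mul {φ : ℂ → ℂ} (hc : ContinuousOn φ {0}ᶜ)
    (hφ : ∀ N : ℕ, ∃ C : ℝ, 0 < C ∧ (∀ ξ : ℂ, ξ ≠ 0 → ‖ξ‖ ≤ 1 → ‖φ ξ‖ ≤ C * ‖ξ‖ ^ N) ∧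
      (∀ ξ : ℂ, 1 ≤ ‖ξ‖ → ‖φ ξ‖ ≤ C * ‖ξ‖⁻¹ ^ N)) (a b : ℕ) :
    Integrable (fun ξ => weight a b ξ * φ ξ) := by
  -- the exponent `b` absorbs the pole of the weight, the exponent `a + 3` its growth
  obtain ⟨C, hC, h0, -⟩ := hφ b
  obtain ⟨D, hD, -, h1⟩ := hφ (a + 3)
  refine integrable_of_bounds (C := max C D) ((continuousOn_weight a b).mul hc) ?_ ?_
  · intro ξ hξ h
    have hp : 0 < ‖ξ‖ := norm_pos_iff.2 hξ
    rw [norm_mul, norm_weight]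
    calc ‖ξ‖ ^ a * (‖ξ‖ ^ b)⁻¹ * ‖φ ξ‖ ≤ 1 * (‖ξ‖ ^ b)⁻¹ * (C * ‖ξ‖ ^ b) := by
          gcongr
          · exact pow_le_one₀ hp.le h
          · exact h0 ξ hξ h
      _ = C := by field_simp
      _ ≤ max C D := le_max_left _ _
  · intro ξ h
    have hp : 0 < ‖ξ‖ := by linarith
    rw [norm_mul, norm_weight]
    calc ‖ξ‖ ^ a * (‖ξ‖ ^ b)⁻¹ * ‖φ ξ‖ ≤ ‖ξ‖ ^ a * 1 * (D * ‖ξ‖⁻¹ ^ (a + 3)) := by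
          gcongr
          · exact inv_le_one_of_one_le₀ (one_le_pow₀ h)
          · exact h1 ξ h
      _ = D * (‖ξ‖ ^ 3)⁻¹ := by rw [inv_pow, pow_add]; field_simp
      _ ≤ max C D * (‖ξ‖ ^ 3)⁻¹ := by gcongr; exact le_max_right _ _

lemma continuousOn_of_rapidDecay {f : ℂ → ℂ} {f' : ℂ → ℂ →L[ℝ] ℂ}
    (hf : HasRapidDecayDeriv f f') : ContinuousOn f {0}ᶜ :=
  fun ξ hξ => (hf.1 ξ hξ).continuousAt.continuousWithinAt

lemma integrable_weight_mul_self {f : ℂ → ℂ} {f' : ℂ → ℂ →L[ℝ] ℂ}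
    (hf : HasRapidDecayDeriv f f') (a b : ℕ) : Integrable (fun ξ => weight a b ξ * f ξ) := by
  refine integrable_weight_mul (continuousOn_of_rapidDecay hf) (fun N => ?_) a b
  obtain ⟨C, hC, h0, h1⟩ := hf.2.2 N
  exact ⟨C, hC, fun ξ hξ h => (h0 ξ hξ h).1, fun ξ h => (h1 ξ h).1⟩

lemma integrable_weight_mul_deriv {f : ℂ → ℂ} {f' : ℂ → ℂ →L[ℝ] ℂ}
    (hf : HasRapidDecayDeriv f f') (a b : ℕ) (v : ℂ) :
    Integrable (fun ξ => weight a b ξ * f' ξ v) := by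
  refine integrable_weight_mul (hf.2.1.clm_apply continuousOn_const) (fun N => ?_) a b
  obtain ⟨C, hC, h0, h1⟩ := hf.2.2 N
  refine ⟨C * (1 + ‖v‖), by positivity, fun ξ hξ h => ?_, fun ξ h => ?_⟩
  · calc ‖f' ξ v‖ ≤ ‖f' ξ‖ * ‖v‖ := (f' ξ).le_opNorm v
      _ ≤ (C * ‖ξ‖ ^ N) * (1 + ‖v‖) := by
        gcongr
        · exact (h0 ξ hξ h).2
        · linarith
      _ = C * (1 + ‖v‖) * ‖ξ‖ ^ N := by ring
  · calc ‖f' ξ v‖ ≤ ‖f' ξ‖ * ‖v‖ := (f' ξ).le_opNorm v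
      _ ≤ (C * ‖ξ‖⁻¹ ^ N) * (1 + ‖v‖) := by
        gcongr
        · exact (h1 ξ h).2
        · linarith
      _ = C * (1 + ‖v‖) * ‖ξ‖⁻¹ ^ N := by ring

/-- The derivative in the direction `v` of `ξ ^ k * f ξ / conj ξ`, expanded by the product rule. At
`ξ = 0` all three terms vanish by the convention `0⁻¹ = 0`. -/
def weightDeriv (f : ℂ → ℂ) (f' : ℂ → ℂ →L[ℝ] ℂ) (k : ℕ) (v ξ : ℂ) : ℂ :=
  k * v * (weight (k - 1) 1 ξ * f ξ) + weight k 1 ξ * f' ξ v - conj v * (weight k 2 ξ * f ξ)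

lemma integrable_weightDeriv {f : ℂ → ℂ} {f' : ℂ → ℂ →L[ℝ] ℂ}
    (hf : HasRapidDecayDeriv f f') (k : ℕ) (v : ℂ) : Integrable (weightDeriv f f' k v) :=
  (((integrable_weight_mul_self hf (k - 1) 1).const_mul _).add
    (integrable_weight_mul_deriv hf k 1 v)).sub ((integrable_weight_mul_self hf k 2).const_mul _)

lemma hasLineDerivAt_weight_mul {f : ℂ → ℂ} {f' : ℂ → ℂ →L[ℝ] ℂ}
    (hf : HasRapidDecayDeriv f f') (k : ℕ) (v ξ : ℂ) :
    HasLineDerivAt ℝ (fun ξ => weight k 1 ξ * f ξ) (weightDeriv f f' k v ξ) ξ v := by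
  by_cases hξ : ξ = 0
  · subst hξ
    -- decay of order `3` beats the simple pole, so the product is `O(|ξ|²)` near `0`
    obtain ⟨C, hC, h0, -⟩ := hf.2.2 3
    have hO : (fun ξ => weight k 1 ξ * f ξ) =O[𝓝 0] fun ξ : ℂ => ‖ξ - 0‖ ^ 2 := by
      refine Asymptotics.IsBigO.of_bound C ?_
      filter_upwards [Metric.closedBall_mem_nhds (0 : ℂ) one_pos] with ξ hξ1
      have h : ‖ξ‖ ≤ 1 := by simpa using hξ1
      by_cases hξ : ξ = 0
      · simp [hξ, weight_zero]
      have hp : 0 < ‖ξ‖ := norm_pos_iff.2 hξ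
      rw [norm_mul, norm_weight]
      calc ‖ξ‖ ^ k * (‖ξ‖ ^ 1)⁻¹ * ‖f ξ‖ ≤ 1 * (‖ξ‖ ^ 1)⁻¹ * (C * ‖ξ‖ ^ 3) := by
            gcongr
            · exact pow_le_one₀ hp.le h
            · exact (h0 ξ hξ h).1
        _ = C * ‖(‖ξ - 0‖ ^ 2)‖ := by simp; field_simp
    have := (hO.hasFDerivAt (𝕜 := ℝ) one_lt_two).hasLineDerivAt v
    simpa [weightDeriv, weight_zero] using this
  · have hf1 := (hf.1 ξ hξ).hasLineDerivAt v
    unfold HasLineDerivAt at hf1 ⊢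
    have hl : HasDerivAt (fun t : ℝ => ξ + t • v) v 0 := by
      simpa using ((hasDerivAt_id (0 : ℝ)).smul_const v).const_add ξ
    have hcl : HasDerivAt (fun t : ℝ => conj (ξ + t • v)) (conj v) 0 := hl.star
    have hcξ : conj ξ ≠ 0 := by simpa using hξ
    have := ((hl.pow k).mul ((hcl.pow 1).inv (by simpa using hξ))).mul hf1
    refine this.congr_deriv ?_
    simp [weightDeriv, weight]
    field_simp
    ring

lemma integral_weightDeriv {f : ℂ → ℂ} {f' : ℂ → ℂ →L[ℝ] ℂ}
    (hf : HasRapidDecayDeriv f f') (k : ℕ) (v : ℂ) : ∫ ξ, weightDeriv f f' k v ξ = 0 := by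
  have := integral_bilinear_hasLineDerivAt_right_eq_neg_left_of_integrable (μ := volume)
    (f := fun _ : ℂ => (1 : ℂ)) (f' := fun _ => 0) (g := fun ξ => weight k 1 ξ * f ξ)
    (g' := weightDeriv f f' k v) (v := v) (B := ContinuousLinearMap.mul ℝ ℂ)
    (by simp) (by simpa using integrable_weightDeriv hf k v)
    (by simpa using integrable_weight_mul_self hf k 1)
    (fun x _ => by simpa using (hasFDerivAt_const (𝕜 := ℝ) (1 : ℂ) x).hasLineDerivAt v)
    (fun x _ => hasLineDerivAt_weight_mul hf k v x)
  simpa using this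

theorem stmt_5 (f : ℂ → ℂ) (f' : ℂ → ℂ →L[ℝ] ℂ) (hf : HasRapidDecayDeriv f f') :
    ∀ k : ℕ,
      ∫ ξ : ℂ, ξ ^ (k + 1) * wirtinger f' ξ * ((‖ξ‖ ^ 2 : ℝ) : ℂ)⁻¹
        = -(k : ℂ) * ∫ ξ : ℂ, ξ ^ k * f ξ * ((‖ξ‖ ^ 2 : ℝ) : ℂ)⁻¹ := by
  intro k
  have hsq (ξ : ℂ) : ((‖ξ‖ ^ 2 : ℝ) : ℂ) = ξ * conj ξ := by
    rw [Complex.mul_conj, Complex.normSq_eq_norm_sq]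
  have hL (ξ : ℂ) : ξ ^ (k + 1) * wirtinger f' ξ * ((‖ξ‖ ^ 2 : ℝ) : ℂ)⁻¹
      = (1 / 2 : ℂ) * (weightDeriv f f' k 1 ξ - Complex.I * weightDeriv f f' k Complex.I ξ)
        - k * (ξ ^ k * f ξ * ((‖ξ‖ ^ 2 : ℝ) : ℂ)⁻¹) := by
    rw [hsq]
    by_cases hξ : ξ = 0
    · simp [hξ, weightDeriv, weight_zero]
    have hcξ : conj ξ ≠ 0 := by simpa using hξ
    have hw : (k : ℂ) * (ξ ^ k * f ξ * (ξ * conj ξ)⁻¹) = k * (weight (k - 1) 1 ξ * f ξ) := by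
      cases k with
      | zero => simp
      | succ n => simp only [weight, pow_one, Nat.add_sub_cancel]; field_simp; ring
    have hw1 : ξ ^ (k + 1) * wirtinger f' ξ * (ξ * conj ξ)⁻¹
        = weight k 1 ξ * wirtinger f' ξ := by
      simp only [weight, pow_one]; field_simp; ring
    rw [hw, hw1]
    simp only [weightDeriv, wirtinger, map_one, Complex.conj_I]
    -- `∂/∂ξ` sends `conj ξ` to `(1 - I * (-I)) / 2 = 0` and `ξ` to `(1 - I * I) / 2 = 1`
    linear_combination (1 / 2 * k * (weight (k - 1) 1 ξ * f ξ)
      + 1 / 2 * (weight k 2 ξ * f ξ)) * Complex.I_sq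
  have hi : Integrable (fun ξ : ℂ => (k : ℂ) * (ξ ^ k * f ξ * ((‖ξ‖ ^ 2 : ℝ) : ℂ)⁻¹)) := by
    refine ((integrable_weight_mul_self hf (k - 1) 1).const_mul (k : ℂ)).congr
      (Filter.Eventually.of_forall fun ξ => ?_)
    simp only [hsq]
    cases k with
    | zero => simp
    | succ n =>
      by_cases hξ : ξ = 0
      · simp [hξ, weight_zero]
      have hcξ : conj ξ ≠ 0 := by simpa using hξ
      simp only [weight, pow_one, Nat.add_sub_cancel]; field_simp; ring
  have h1 := integrable_weightDeriv hf k 1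
  have hI := (integrable_weightDeriv hf k Complex.I).const_mul Complex.I
  have hd : Integrable (fun ξ => weightDeriv f f' k 1 ξ
      - Complex.I * weightDeriv f f' k Complex.I ξ) := h1.sub hI
  simp_rw [hL]
  rw [integral_sub (hd.const_mul _) hi, integral_const_mul, integral_sub h1 hI,
    integral_const_mul, integral_const_mul, integral_weightDeriv hf, integral_weightDeriv hf]
  ring
end
end

section
/- Let f : ℂ → ℂ have rapid decay with derivative on ℂ*. Then for every t ∈ ℂ \ {0}: f(t) = (-1/π)·∫_ℂ (∂f/∂ξ̄)(ξ)·(ξ - t)^{-1} dA(ξ). -/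
/-!
A function `f` of rapid decay extends to a `C¹` function `g` on all of `ℂ` by `g 0 = 0`, `g' 0 = 0`,
because `f` and `f'` vanish to second order at the origin; the integrand changes only on a null set.
So, after translating `t` to the origin, the claim is `∫ (∂h/∂ξ̄) ξ⁻¹ dA = -π h(0)` for a `C¹`
function `h` on the plane with `h, h' = O((1 + |ξ|²)⁻¹)` (`integral_wirtingerBar_mul_inv`).

In polar coordinates `r · (∂h/∂ξ̄) · ξ⁻¹ = (∂h/∂r + (i/r) ∂h/∂θ) / 2`. Both terms are dominated by
`(1 + r²)⁻¹`, which is integrable on `(0, ∞) × (-π, π)`, so Fubini applies to each of them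
separately. The radial term integrates to `-h(0)` along every ray (`integral_radial`), and the
angular term integrates to `0` over every circle by periodicity (`integral_angular`). Working
directly with the singular integrand in this way avoids removing a small disc around the pole.
-/

open MeasureTheory

noncomputable section

/-- The antiholomorphic Wirtinger derivative `∂f/∂ξ̄ = (1/2)(∂f/∂x + i·∂f/∂y)`,
expressed through the real Fréchet derivative `f'`. -/
def wirtingerBar (f' : ℂ → ℂ →L[ℝ] ℂ) (ξ : ℂ) : ℂ :=
  (1 / 2 : ℂ) * (f' ξ 1 + Complex.I * f' ξ Complex.I)

/-- The unit vector `e^{iθ}`. -/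
def unitDir (θ : ℝ) : ℂ := Complex.exp (θ * Complex.I)

lemma norm_unitDir (θ : ℝ) : ‖unitDir θ‖ = 1 := Complex.norm_exp_ofReal_mul_I θ

lemma continuous_unitDir : Continuous unitDir := by unfold unitDir; fun_prop

lemma unitDir_eq (θ : ℝ) :
    unitDir θ = (Real.cos θ : ℂ) + (Real.sin θ : ℂ) * Complex.I := by
  rw [unitDir, Complex.exp_mul_I, Complex.ofReal_cos, Complex.ofReal_sin]

lemma hasDerivAt_unitDir (θ : ℝ) : HasDerivAt unitDir (Complex.I * unitDir θ) θ := by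
  have h : HasDerivAt (fun x : ℝ => (x : ℂ) * Complex.I) (1 * Complex.I) θ :=
    (Complex.ofRealCLM.hasDerivAt (x := θ)).mul_const Complex.I
  have := h.cexp
  unfold unitDir
  convert this using 1
  ring

/-- The polar form `∂h/∂ξ̄ = e^{iθ} (∂h/∂r + (i/r) ∂h/∂θ) / 2`, multiplied by `r ξ⁻¹ = e^{-iθ}`.
The directional derivatives along `e^{iθ}` and `i e^{iθ}` are `∂h/∂r` and `(1/r) ∂h/∂θ`. -/
lemma polar_integrand_eq (h' : ℂ → ℂ →L[ℝ] ℂ) {r : ℝ} (hr : 0 < r) (θ : ℝ) :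
    r • (wirtingerBar h' (r * unitDir θ) * (r * unitDir θ)⁻¹) =
      (1 / 2 : ℂ) * (h' (r * unitDir θ) (unitDir θ)
        + Complex.I * h' (r * unitDir θ) (Complex.I * unitDir θ)) := by
  have hr' : (r : ℂ) ≠ 0 := by exact_mod_cast hr.ne'
  have hu : unitDir θ ≠ 0 := Complex.exp_ne_zero _
  rw [wirtingerBar, Complex.real_smul]
  generalize h' (r * unitDir θ) = L
  have e1 : L (unitDir θ) = Real.cos θ * L 1 + Real.sin θ * L Complex.I := by
    have : unitDir θ = Real.cos θ • (1 : ℂ) + Real.sin θ • Complex.I := by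
      rw [unitDir_eq]; simp
    rw [this, map_add, map_smul, map_smul, Complex.real_smul, Complex.real_smul]
  have e2 : L (Complex.I * unitDir θ) = -Real.sin θ * L 1 + Real.cos θ * L Complex.I := by
    have : Complex.I * unitDir θ = (-Real.sin θ) • (1 : ℂ) + Real.cos θ • Complex.I := by
      rw [unitDir_eq, Complex.real_smul, Complex.real_smul]
      push_cast
      linear_combination (Complex.sin θ) * Complex.I_sq
    rw [this, map_add, map_smul, map_smul, Complex.real_smul, Complex.real_smul]
    push_cast; ring
  have e3 : (unitDir θ)⁻¹ = Real.cos θ - Real.sin θ * Complex.I := by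
    refine inv_eq_of_mul_eq_one_right ?_
    rw [unitDir_eq]
    have : (Real.cos θ : ℂ) ^ 2 + (Real.sin θ : ℂ) ^ 2 = 1 := by
      exact_mod_cast Real.cos_sq_add_sin_sq θ
    linear_combination this - (Real.sin θ : ℂ) ^ 2 * Complex.I_sq
  rw [e1, e2, mul_inv, e3]
  field_simp
  linear_combination (-Real.sin θ * L Complex.I) * Complex.I_sq

section Plane

variable {h : ℂ → ℂ} {h' : ℂ → ℂ →L[ℝ] ℂ} {K : ℝ}

lemma norm_apply_polar_le (hb' : ∀ ξ, ‖h' ξ‖ ≤ K * (1 + ‖ξ‖ ^ 2)⁻¹) (r θ : ℝ) {v : ℂ}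
    (hv : ‖v‖ = 1) : ‖h' (r * unitDir θ) v‖ ≤ K * (1 + r ^ 2)⁻¹ := by
  have h1 := (h' (r * unitDir θ)).le_opNorm v
  have h2 := hb' (r * unitDir θ)
  rw [norm_mul, norm_unitDir, mul_one, Complex.norm_real, Real.norm_eq_abs, sq_abs] at h2
  rw [hv, mul_one] at h1
  exact h1.trans h2

/-- The derivative of `h` along each ray integrates to `-h(0)`. -/
lemma integral_radial (hd : ∀ ξ, HasFDerivAt h (h' ξ) ξ) (hc : Continuous h')
    (hb : ∀ ξ, ‖h ξ‖ ≤ K * (1 + ‖ξ‖ ^ 2)⁻¹) (hb' : ∀ ξ, ‖h' ξ‖ ≤ K * (1 + ‖ξ‖ ^ 2)⁻¹)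
    (θ : ℝ) : ∫ r in Set.Ioi (0 : ℝ), h' (r * unitDir θ) (unitDir θ) = - h 0 := by
  have hder : ∀ r : ℝ, HasDerivAt (fun r : ℝ => h (r * unitDir θ))
      (h' (r * unitDir θ) (unitDir θ)) r := by
    intro r
    have h1 : HasDerivAt (fun x : ℝ => (x : ℂ) * unitDir θ) (unitDir θ) r := by
      simpa using (Complex.ofRealCLM.hasDerivAt (x := r)).mul_const (unitDir θ)
    exact (hd _).comp_hasDerivAt r h1
  have hint : IntegrableOn (fun r : ℝ => h' (r * unitDir θ) (unitDir θ)) (Set.Ioi 0) := by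
    refine Integrable.mono' (integrable_inv_one_add_sq.const_mul K).integrableOn ?_
      (ae_of_all _ fun r => norm_apply_polar_le hb' r θ (norm_unitDir θ))
    have : Continuous fun r : ℝ => h' (r * unitDir θ) (unitDir θ) := by fun_prop
    exact this.aestronglyMeasurable
  have hlim : Filter.Tendsto (fun r : ℝ => h (r * unitDir θ)) Filter.atTop (nhds 0) := by
    refine squeeze_zero_norm (a := fun r : ℝ => K * (1 + r ^ 2)⁻¹) (fun r => ?_) ?_
    · have := hb (r * unitDir θ)
      rwa [norm_mul, norm_unitDir, mul_one, Complex.norm_real, Real.norm_eq_abs, sq_abs] at this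
    · have : Filter.Tendsto (fun r : ℝ => 1 + r ^ 2) Filter.atTop Filter.atTop :=
        Filter.tendsto_atTop_add_const_left _ _ (Filter.tendsto_pow_atTop two_ne_zero)
      simpa using this.inv_tendsto_atTop.const_mul K
  have := integral_Ioi_of_hasDerivAt_of_tendsto' (fun r _ => hder r) hint hlim
  simpa using this

/-- `(1/r) ∂h/∂θ` integrates to zero over each circle, since `h` is `2π`-periodic in `θ`. -/
lemma integral_angular (hd : ∀ ξ, HasFDerivAt h (h' ξ) ξ) (hc : Continuous h')
    {r : ℝ} (hr : 0 < r) :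
    ∫ θ in Set.Ioo (-Real.pi) Real.pi, h' (r * unitDir θ) (Complex.I * unitDir θ) = 0 := by
  have hder : ∀ θ : ℝ, HasDerivAt (fun θ : ℝ => h (r * unitDir θ))
      (r • h' (r * unitDir θ) (Complex.I * unitDir θ)) θ := by
    intro θ
    have := (hd _).comp_hasDerivAt θ ((hasDerivAt_unitDir θ).const_mul (r : ℂ))
    rwa [← Complex.real_smul (z := Complex.I * unitDir θ), map_smul] at this
  have hcont : Continuous fun θ : ℝ => r • h' (r * unitDir θ) (Complex.I * unitDir θ) := by
    have := continuous_unitDir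
    fun_prop
  have key := intervalIntegral.integral_eq_sub_of_hasDerivAt (fun θ _ => hder θ)
    (hcont.intervalIntegrable (-Real.pi) Real.pi)
  have hper : unitDir (-Real.pi) = unitDir Real.pi := by simp [unitDir_eq]
  rw [hper, sub_self, intervalIntegral.integral_smul,
    intervalIntegral.integral_of_le (by linarith [Real.pi_pos]),
    integral_Ioc_eq_integral_Ioo] at key
  exact (smul_eq_zero.mp key).resolve_left (ne_of_gt hr)

/-- The domination by `(1 + r²)⁻¹` that justifies Fubini for both polar terms. -/
lemma integrable_polar (hc : Continuous h') (hb' : ∀ ξ, ‖h' ξ‖ ≤ K * (1 + ‖ξ‖ ^ 2)⁻¹)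
    {v : ℝ → ℂ} (hv : Continuous v) (hv1 : ∀ θ, ‖v θ‖ = 1) :
    Integrable (fun p : ℝ × ℝ => h' (p.1 * unitDir p.2) (v p.2))
      ((volume.restrict (Set.Ioi 0)).prod (volume.restrict (Set.Ioo (-Real.pi) Real.pi))) := by
  have hdom := ((integrable_inv_one_add_sq.const_mul K).integrableOn
    (s := Set.Ioi (0 : ℝ))).integrable.comp_fst
      (volume.restrict (Set.Ioo (-Real.pi) Real.pi))
  refine hdom.mono' ?_ (ae_of_all _ fun p => norm_apply_polar_le hb' p.1 p.2 (hv1 p.2))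
  have hu := continuous_unitDir
  have : Continuous fun p : ℝ × ℝ => h' (p.1 * unitDir p.2) (v p.2) := by fun_prop
  exact this.aestronglyMeasurable

/-- The Cauchy–Pompeiu formula at the origin for a decaying `C¹` function on the whole plane. -/
lemma integral_wirtingerBar_mul_inv (hd : ∀ ξ, HasFDerivAt h (h' ξ) ξ) (hc : Continuous h')
    (hb : ∀ ξ, ‖h ξ‖ ≤ K * (1 + ‖ξ‖ ^ 2)⁻¹) (hb' : ∀ ξ, ‖h' ξ‖ ≤ K * (1 + ‖ξ‖ ^ 2)⁻¹) :
    ∫ ξ : ℂ, wirtingerBar h' ξ * ξ⁻¹ = -(Real.pi * h 0) := by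
  rw [← Complex.integral_comp_polarCoord_symm]
  have htar : polarCoord.target = Set.Ioi (0 : ℝ) ×ˢ Set.Ioo (-Real.pi) Real.pi := rfl
  have hI1 : ∀ θ, ‖Complex.I * unitDir θ‖ = 1 := fun θ => by
    rw [norm_mul, Complex.norm_I, norm_unitDir, mul_one]
  have int1 := integrable_polar hc hb' continuous_unitDir norm_unitDir
  have int2 := integrable_polar (v := fun θ => Complex.I * unitDir θ) hc hb'
    (continuous_const.mul continuous_unitDir) hI1
  have hmeas : MeasurableSet (Set.Ioi (0 : ℝ) ×ˢ Set.Ioo (-Real.pi) Real.pi) :=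
    measurableSet_Ioi.prod measurableSet_Ioo
  rw [htar, setIntegral_congr_fun (g := fun p : ℝ × ℝ =>
      (1 / 2 : ℂ) * (h' (p.1 * unitDir p.2) (unitDir p.2)
        + Complex.I * h' (p.1 * unitDir p.2) (Complex.I * unitDir p.2))) hmeas]
  · rw [Measure.volume_eq_prod, ← Measure.prod_restrict, integral_const_mul,
      integral_add int1 (int2.const_mul _), integral_const_mul,
      integral_prod_symm _ int1, integral_prod _ int2]
    have ang : ∫ r in Set.Ioi (0 : ℝ), ∫ θ in Set.Ioo (-Real.pi) Real.pi,
        h' (r * unitDir θ) (Complex.I * unitDir θ) = 0 := by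
      rw [setIntegral_congr_fun (g := fun _ => (0 : ℂ)) measurableSet_Ioi
        (fun r hr => integral_angular hd hc hr), integral_zero]
    simp only [integral_radial hd hc hb hb']
    rw [ang, setIntegral_const, Measure.real, Real.volume_Ioo,
      ENNReal.toReal_ofReal (by linarith [Real.pi_pos]), Complex.real_smul]
    push_cast
    ring
  · intro p hp
    have e : Complex.polarCoord.symm p = p.1 * unitDir p.2 := by
      rw [Complex.polarCoord_symm_apply, unitDir_eq]
    beta_reduce
    rw [e]
    exact polar_integrand_eq h' hp.1 p.2

end Plane

/-- The shifted weight `(1 + |ξ + t|²)⁻¹` is comparable to `(1 + |ξ|²)⁻¹`. -/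
lemma inv_one_add_norm_add_sq_le (ξ t : ℂ) :
    (1 + ‖ξ + t‖ ^ 2)⁻¹ ≤ 2 * (1 + ‖t‖ ^ 2) * (1 + ‖ξ‖ ^ 2)⁻¹ := by
  have h1 : ‖ξ‖ ≤ ‖ξ + t‖ + ‖t‖ := by simpa using norm_sub_le (ξ + t) t
  have h2 : ‖ξ‖ ^ 2 ≤ (‖ξ + t‖ + ‖t‖) ^ 2 := by gcongr
  rw [← div_eq_mul_inv, inv_eq_one_div, div_le_div_iff₀ (by positivity) (by positivity)]
  nlinarith [sq_nonneg (‖ξ + t‖ - ‖t‖), mul_nonneg (sq_nonneg ‖ξ + t‖) (sq_nonneg ‖t‖)]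

/-- The case `N = 2` of rapid decay gives a bound by `(1 + |ξ|²)⁻¹` on all of `ℂ*`. -/
lemma le_inv_one_add_sq {C a x : ℝ} (hC : 0 < C) (hx : 0 < x)
    (h0 : x ≤ 1 → a ≤ C * x ^ 2) (h1 : 1 ≤ x → a ≤ C * x⁻¹ ^ 2) :
    a ≤ 2 * C * (1 + x ^ 2)⁻¹ := by
  rw [← div_eq_mul_inv, le_div_iff₀ (by positivity)]
  rcases le_total x 1 with h | h
  · have hx2 : x ^ 2 ≤ 1 := pow_le_one₀ hx.le h
    calc a * (1 + x ^ 2) ≤ C * x ^ 2 * (1 + x ^ 2) := by gcongr; exact h0 h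
      _ ≤ C * 1 * (1 + 1) := by gcongr
      _ = 2 * C := by ring
  · have hx2 : 1 ≤ x ^ 2 := one_le_pow₀ h
    calc a * (1 + x ^ 2) ≤ C * x⁻¹ ^ 2 * (1 + x ^ 2) := by gcongr; exact h1 h
      _ ≤ C * x⁻¹ ^ 2 * (x ^ 2 + x ^ 2) := by gcongr
      _ = 2 * C := by field_simp; ring

/-- Extending `f` and `f'` by zero at the origin gives a `C¹` function on the whole plane: the
quadratic vanishing of `f` makes its derivative at `0` exist and equal `0`, and the vanishing of
`f'` makes the derivative continuous there. -/
lemma exists_extension {f : ℂ → ℂ} {f' : ℂ → ℂ →L[ℝ] ℂ} (hf : HasRapidDecayDeriv f f') :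
    ∃ (g : ℂ → ℂ) (g' : ℂ → ℂ →L[ℝ] ℂ) (K : ℝ), 0 < K ∧
      (∀ ξ, ξ ≠ 0 → g ξ = f ξ) ∧ (∀ ξ, ξ ≠ 0 → g' ξ = f' ξ) ∧
      (∀ ξ, HasFDerivAt g (g' ξ) ξ) ∧ Continuous g' ∧
      (∀ ξ, ‖g ξ‖ ≤ K * (1 + ‖ξ‖ ^ 2)⁻¹) ∧ (∀ ξ, ‖g' ξ‖ ≤ K * (1 + ‖ξ‖ ^ 2)⁻¹) := by
  classical
  obtain ⟨hd, hc, hN⟩ := hf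
  obtain ⟨C, hC, hsmall, hbig⟩ := hN 2
  have hne : ∀ ξ : ℂ, ξ ≠ 0 → ∀ᶠ z in nhds ξ, z ≠ 0 := fun ξ hξ =>
    isOpen_ne.mem_nhds hξ
  have hnear : ∀ᶠ z : ℂ in nhds 0, ‖z‖ ≤ 1 := by
    filter_upwards [Metric.ball_mem_nhds (0 : ℂ) one_pos] with z hz
    exact (mem_ball_zero_iff.mp hz).le
  refine ⟨Function.update f 0 0, Function.update f' 0 0, 2 * C, by positivity,
    fun ξ hξ => Function.update_of_ne hξ _ _, fun ξ hξ => Function.update_of_ne hξ _ _,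
    fun ξ => ?_, continuous_iff_continuousAt.mpr fun ξ => ?_, fun ξ => ?_, fun ξ => ?_⟩
  · by_cases hξ : ξ = 0
    · subst hξ
      rw [Function.update_self]
      refine HasFDerivAt.of_isLittleO ?_
      have hO : (fun z : ℂ => Function.update f 0 0 z - Function.update f 0 0 0
          - (0 : ℂ →L[ℝ] ℂ) (z - 0)) =O[nhds 0] fun z : ℂ => ‖z‖ ^ 2 := by
        refine Asymptotics.IsBigO.of_bound C ?_
        filter_upwards [hnear] with z hz
        by_cases h0 : z = 0
        · simp [h0]
        · simpa [Function.update_of_ne h0] using (hsmall z h0 hz).1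
      refine hO.trans_isLittleO ?_
      simpa using Asymptotics.isLittleO_norm_pow_id (E' := ℂ) one_lt_two
    · rw [Function.update_of_ne hξ]
      refine (hd ξ hξ).congr_of_eventuallyEq ?_
      filter_upwards [hne ξ hξ] with z hz
      exact Function.update_of_ne hz _ _
  · by_cases hξ : ξ = 0
    · subst hξ
      rw [ContinuousAt, Function.update_self]
      refine squeeze_zero_norm' (a := fun z : ℂ => C * ‖z‖ ^ 2) ?_ ?_
      · filter_upwards [hnear] with z hz
        by_cases h0 : z = 0
        · simp [h0]
        · simpa [Function.update_of_ne h0] using (hsmall z h0 hz).2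
      · have : Continuous fun z : ℂ => C * ‖z‖ ^ 2 := by fun_prop
        simpa using this.tendsto 0
    · refine (hc.continuousAt (isOpen_ne.mem_nhds hξ)).congr ?_
      filter_upwards [hne ξ hξ] with z hz
      exact (Function.update_of_ne hz _ _).symm
  · by_cases hξ : ξ = 0
    · subst hξ; simp [hC.le]
    · rw [Function.update_of_ne hξ]
      exact le_inv_one_add_sq hC (norm_pos_iff.mpr hξ) (fun h => (hsmall ξ hξ h).1)
        fun h => (hbig ξ h).1
  · by_cases hξ : ξ = 0
    · subst hξ; simp [hC.le]
    · rw [Function.update_of_ne hξ]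
      exact le_inv_one_add_sq hC (norm_pos_iff.mpr hξ) (fun h => (hsmall ξ hξ h).2)
        fun h => (hbig ξ h).2

theorem stmt_7 (f : ℂ → ℂ) (f' : ℂ → ℂ →L[ℝ] ℂ) (hf : HasRapidDecayDeriv f f') :
    ∀ t : ℂ, t ≠ 0 →
      f t = (-1 / (Real.pi : ℂ)) * ∫ ξ : ℂ, wirtingerBar f' ξ * (ξ - t)⁻¹ := by
  intro t ht
  obtain ⟨g, g', K, hK, hg, hg', hd, hc, hb, hb'⟩ := exists_extension hf
  have hae : ∫ ξ : ℂ, wirtingerBar f' ξ * (ξ - t)⁻¹ =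
      ∫ ξ : ℂ, wirtingerBar g' ξ * (ξ - t)⁻¹ := by
    refine integral_congr_ae ?_
    filter_upwards [Measure.ae_ne volume (0 : ℂ)] with ξ hξ
    rw [wirtingerBar, wirtingerBar, hg' ξ hξ]
  have hshift : ∀ {a : ℝ} {ξ : ℂ}, a ≤ K * (1 + ‖ξ + t‖ ^ 2)⁻¹ →
      a ≤ K * (2 * (1 + ‖t‖ ^ 2)) * (1 + ‖ξ‖ ^ 2)⁻¹ := by
    intro a ξ ha
    rw [mul_assoc]
    exact ha.trans (mul_le_mul_of_nonneg_left (inv_one_add_norm_add_sq_le ξ t) hK.le)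
  have key := integral_wirtingerBar_mul_inv (h := fun ξ => g (ξ + t)) (h' := fun ξ => g' (ξ + t))
    (fun ξ => (hasFDerivAt_comp_add_right t).mpr (hd (ξ + t))) (by fun_prop)
    (fun ξ => hshift (hb _)) (fun ξ => hshift (hb' _))
  have htrans := integral_add_right_eq_self (μ := (volume : Measure ℂ))
    (fun ξ : ℂ => wirtingerBar g' ξ * (ξ - t)⁻¹) t
  simp only [add_sub_cancel_right] at htrans
  have hpi : (Real.pi : ℂ) ≠ 0 := by exact_mod_cast Real.pi_ne_zero
  rw [hae, ← htrans]
  change f t = (-1 / (Real.pi : ℂ)) *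
    ∫ ξ : ℂ, wirtingerBar (fun ξ => g' (ξ + t)) ξ * ξ⁻¹
  rw [key, zero_add, hg t ht]
  field_simp
end
end

section
/- Let S be a set and let E be a finite-dimensional ℂ-subspace of the space of bounded functions S → ℂ (with the supremum norm). Let T⁰ ∈ ℂ, R > 0, and let g : S × B(T⁰,R) → ℂ, where B(T⁰,R) = {T : |T - T⁰| < R}, satisfy: (i) for every t ∈ S, the map T ↦ g(t,T) is holomorphic on B(T⁰,R); (ii) for every 0 < r < R, sup{ |g(t,T)| : t ∈ S, |T - T⁰| ≤ r } < ∞; (iii) for every T ∈ B(T⁰,R), the function t ↦ g(t,T) belongs to E. Then there exist finitely many functions f_1, …, f_d ∈ E and holomorphic functions λ_1, …, λ_d : B(T⁰,R) → ℂ such that g(t,T) = Σ_{k=1}^d λ_k(T)·f_k(t) for all (t,T) ∈ S × B(T⁰,R). -/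
/-!
The evaluations at points of `S` separate the elements of the finite-dimensional space `E`, hence
span its dual. The coordinate functionals of a basis `f₁, …, f_d` of `E` are therefore finite linear
combinations of evaluations. Applied to the element `g(·, T)` of `E`, they show that its `k`-th
coordinate `λ_k(T)` is a finite linear combination of the functions `T ↦ g(s, T)`, and so is
holomorphic.
-/

theorem stmt_12 (S : Type*) (E : Submodule ℂ (S → ℂ)) [FiniteDimensional ℂ E]
    (hbdd : ∀ h ∈ E, ∃ M : ℝ, ∀ t : S, ‖h t‖ ≤ M)
    (T0 : ℂ) (R : ℝ) (hR : 0 < R) (g : S → ℂ → ℂ)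
    (hol : ∀ t : S, DifferentiableOn ℂ (g t) (Metric.ball T0 R))
    (hloc : ∀ r : ℝ, 0 < r → r < R →
      ∃ M : ℝ, ∀ t : S, ∀ T ∈ Metric.closedBall T0 r, ‖g t T‖ ≤ M)
    (hmem : ∀ T ∈ Metric.ball T0 R, (fun t : S => g t T) ∈ E) :
    ∃ (d : ℕ) (f : Fin d → (S → ℂ)) (lam : Fin d → ℂ → ℂ),
      (∀ k : Fin d, f k ∈ E) ∧
      (∀ k : Fin d, DifferentiableOn ℂ (lam k) (Metric.ball T0 R)) ∧
      ∀ (t : S), ∀ T ∈ Metric.ball T0 R, g t T = ∑ k : Fin d, lam k T * f k t := by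
  classical
  let b := Module.finBasis ℂ E
  let ev : S → Module.Dual ℂ E := fun t => (LinearMap.proj t).comp E.subtype
  -- A function in `E` killed by every evaluation is zero, so the evaluations span the dual of `E`.
  have hspan : Submodule.span ℂ (Set.range ev) = ⊤ := by
    apply Submodule.span_eq_top_of_ne_zero
    intro h hh
    by_contra! hzero
    exact hh (Subtype.ext (funext fun t => hzero (ev t) ⟨t, rfl⟩))
  have hcoord : ∀ k, ∃ c : S →₀ ℂ, c.sum (fun t a => a • ev t) = b.coord k := fun k =>
    Finsupp.mem_span_range_iff_exists_finsupp.mp (hspan ▸ Submodule.mem_top)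
  choose c hc using hcoord
  refine ⟨_, fun k => (b k : S → ℂ), fun k T => ∑ s ∈ (c k).support, c k s * g s T,
    fun k => (b k).2, fun k => ?_, fun t T hT => ?_⟩
  · exact DifferentiableOn.fun_sum fun s _ => (hol s).const_mul _
  · have hlam : ∀ k, b.repr ⟨fun s => g s T, hmem T hT⟩ k
        = ∑ s ∈ (c k).support, c k s * g s T := fun k => by
      rw [← Module.Basis.coord_apply, ← hc k]
      simp [Finsupp.sum, ev]
    have hsum := congrArg (ev t) (b.sum_repr ⟨fun s => g s T, hmem T hT⟩)
    simpa [ev, hlam] using hsum.symm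
end

section
/- Let f : ℂ → ℂ have rapid decay with derivative on ℂ*, and suppose that all Mellin moments of f vanish: ∫_ℂ ξ^k·f(ξ)·|ξ|^{-2} dA(ξ) = 0 for every integer k ∈ ℤ. Then there exists a continuously real-differentiable function g : ℂ \ {0} → ℂ having rapid decay on ℂ* such that -t̄·(∂g/∂t̄)(t) = f(t) for all t ∈ ℂ \ {0}; one may take g = K*f, the Mellin kernel transform of f. -/
/-!
Put `h(ξ) = f(ξ) |ξ|⁻²`, extended by `0` at the origin. Rapid decay of `f` and `Df` makes `h` a `C¹`
function on all of `ℂ` with `h` and `Dh` bounded by a multiple of `(1 + |ξ|)⁻⁴`. Since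
`(1 - ξ/t)⁻¹ = t / (t - ξ)`, the Mellin kernel transform is `-t/π` times the Cauchy transform
`∫ h(t - u) u⁻¹ dA(u)` (`melKer_eq`).

The Cauchy transform is `C¹` by differentiation under the integral sign (`hasFDerivAt_cauchy`), and
the Cauchy–Pompeiu formula (`cauchy_pompeiu`) says that its `∂̄`-derivative is `π h(t)`. Hence
`∂̄ (K*f)(t) = -t h(t)`, so `-t̄ ∂̄ (K*f)(t) = |t|² h(t) = f(t)`.

For the decay, let `Hₙ` be the Cauchy transform of `ξⁿ h(ξ)`, `n ∈ ℤ`. Writing `t - u` for one factor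
`ξ` gives `Hₙ₊₁(t) = t Hₙ(t) - ∫ ξⁿ h`, and the last term is a vanishing moment
(`cauchyMoment_succ`). So `K*f = -(1/π) t^(1-n) Hₙ` for every integer `n`, with `Hₙ` bounded
(`exists_norm_integral_inv_smul_le`). Taking `n → -∞` gives rapid decay at `0`, and `n → ∞` gives
rapid decay at `∞`.
-/

open MeasureTheory

noncomputable section

/-- The Mellin kernel transform `(K*f)(t) = (-1/π) ∫_ℂ f(ξ)·(1 - ξ/t)⁻¹·|ξ|⁻² dA(ξ)`. -/
def melKer (f : ℂ → ℂ) (t : ℂ) : ℂ :=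
  (-1 / (Real.pi : ℂ)) * ∫ ξ : ℂ, f ξ * (1 - ξ / t)⁻¹ * ((‖ξ‖ ^ 2 : ℝ) : ℂ)⁻¹

open Set Filter Topology

/-! ### An integrable weight and Cauchy transforms of decaying functions -/

/-- The weight `(1 + |x|)⁻⁴` on `ℂ`, integrable even against the kernel `|x|⁻¹`. -/
def decayWeight (x : ℂ) : ℝ := ((1 + ‖x‖) ^ 4)⁻¹

lemma decayWeight_pos (x : ℂ) : 0 < decayWeight x := by
  unfold decayWeight; positivity

lemma decayWeight_le_one (x : ℂ) : decayWeight x ≤ 1 := by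
  unfold decayWeight
  exact inv_le_one_of_one_le₀ (one_le_pow₀ (by linarith [norm_nonneg x]))

lemma continuous_decayWeight : Continuous decayWeight := by
  unfold decayWeight
  refine Continuous.inv₀ (by fun_prop) fun x => ?_
  positivity

/-- The weight is slowly varying: translations change it by a bounded factor. -/
lemma decayWeight_sub_le (t u : ℂ) :
    decayWeight (t - u) ≤ (1 + ‖t‖) ^ 4 * decayWeight u := by
  unfold decayWeight
  have h1 : ‖u‖ ≤ ‖t‖ + ‖t - u‖ := by
    have := norm_sub_le t (t - u)
    simpa using this
  have h2 : 1 + ‖u‖ ≤ (1 + ‖t‖) * (1 + ‖t - u‖) := by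
    nlinarith [norm_nonneg t, norm_nonneg (t - u)]
  have h3 : (1 + ‖u‖) ^ 4 ≤ (1 + ‖t‖) ^ 4 * (1 + ‖t - u‖) ^ 4 := by
    rw [← mul_pow]; gcongr
  rw [← div_eq_mul_inv, inv_eq_one_div, div_le_div_iff₀ (by positivity) (by positivity), one_mul]
  exact h3

lemma integrable_one_add_norm_pow_four {E : Type*} [NormedAddCommGroup E] [NormedSpace ℝ E]
    [FiniteDimensional ℝ E] [MeasurableSpace E] [BorelSpace E] (μ : Measure E)
    [μ.IsAddHaarMeasure] (hE : Module.finrank ℝ E < 4) :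
    Integrable (fun x : E => ((1 + ‖x‖) ^ 4)⁻¹) μ := by
  have h : Integrable (fun x : E => (1 + ‖x‖) ^ (-(4 : ℝ))) μ :=
    integrable_one_add_norm (by exact_mod_cast hE)
  refine h.congr (Eventually.of_forall fun x => ?_)
  have : 0 ≤ 1 + ‖x‖ := by positivity
  simp only [Real.rpow_neg this]
  norm_cast

lemma integrable_decayWeight : Integrable decayWeight :=
  integrable_one_add_norm_pow_four volume (by simp [Complex.finrank_real_complex])

/-- In polar coordinates the Jacobian cancels the singularity `|u|⁻¹`. -/
lemma integrable_inv_mul_decayWeight :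
    Integrable (fun u : ℂ => ‖u‖⁻¹ * decayWeight u) := by
  have := (integrable_fun_norm_addHaar (E := ℂ) volume
    (f := fun r : ℝ => r⁻¹ * ((1 + r) ^ 4)⁻¹)).2 ?_
  · exact this
  · have h := (integrable_one_add_norm_pow_four (E := ℝ) volume (by simp)).integrableOn
      (s := Ioi (0 : ℝ))
    refine h.congr_fun (fun y hy => ?_) measurableSet_Ioi
    have hy' : (0 : ℝ) < y := hy
    simp [Complex.finrank_real_complex, abs_of_pos hy', hy'.ne']

/-- The common dominating function, for all `t` with `‖t‖ ≤ A`. -/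
lemma norm_inv_smul_le {E : Type*} [NormedAddCommGroup E] [NormedSpace ℂ E] {H : ℂ → E} {C : ℝ}
    (hC : 0 ≤ C) (hb : ∀ ξ, ‖H ξ‖ ≤ C * decayWeight ξ) {t : ℂ} {A : ℝ} (ht : ‖t‖ ≤ A) (u : ℂ) :
    ‖u⁻¹ • H (t - u)‖ ≤ C * (1 + A) ^ 4 * (‖u‖⁻¹ * decayWeight u) := by
  rw [norm_smul, norm_inv]
  have h0 := decayWeight_pos u
  have h1 : decayWeight (t - u) ≤ (1 + A) ^ 4 * decayWeight u :=
    (decayWeight_sub_le t u).trans (by gcongr)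
  calc ‖u‖⁻¹ * ‖H (t - u)‖ ≤ ‖u‖⁻¹ * (C * ((1 + A) ^ 4 * decayWeight u)) := by
        gcongr
        exact (hb _).trans (by gcongr)
    _ = _ := by ring

lemma aestronglyMeasurable_inv_smul {E : Type*} [NormedAddCommGroup E] [NormedSpace ℂ E]
    {H : ℂ → E} (hm : AEStronglyMeasurable H volume) (t : ℂ) :
    AEStronglyMeasurable (fun u : ℂ => u⁻¹ • H (t - u)) volume :=
  (measurable_inv.aestronglyMeasurable).smul
    (hm.comp_quasiMeasurePreserving
      (Measure.measurePreserving_sub_left volume t).quasiMeasurePreserving)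

lemma integrable_inv_smul {E : Type*} [NormedAddCommGroup E] [NormedSpace ℂ E] {H : ℂ → E} {C : ℝ}
    (hm : AEStronglyMeasurable H volume)
    (hC : 0 ≤ C) (hb : ∀ ξ, ‖H ξ‖ ≤ C * decayWeight ξ) (t : ℂ) :
    Integrable (fun u : ℂ => u⁻¹ • H (t - u)) :=
  (integrable_inv_mul_decayWeight.const_mul _).mono' (aestronglyMeasurable_inv_smul hm t)
    (Eventually.of_forall (norm_inv_smul_le hC hb le_rfl))

/-- The Cauchy transform of a decaying function is bounded, uniformly in the base point. -/
lemma exists_norm_integral_inv_smul_le {H : ℂ → ℂ} {C : ℝ}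
    (hC : 0 ≤ C) (hb : ∀ ξ, ‖H ξ‖ ≤ C * decayWeight ξ) :
    ∃ K, ∀ t, ‖∫ u : ℂ, u⁻¹ • H (t - u)‖ ≤ K := by
  refine ⟨C * (16 * (∫ u : ℂ, ‖u‖⁻¹ * decayWeight u) + ∫ u, decayWeight u), fun t => ?_⟩
  have hi1 := integrable_inv_mul_decayWeight.const_mul 16
  have hi2 := integrable_decayWeight.comp_sub_left t
  calc ‖∫ u : ℂ, u⁻¹ • H (t - u)‖
      ≤ ∫ u : ℂ, C * (16 * (‖u‖⁻¹ * decayWeight u) + decayWeight (t - u)) := by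
        refine norm_integral_le_of_norm_le ((hi1.add hi2).const_mul C)
          (Eventually.of_forall fun u => ?_)
        rw [norm_smul, norm_inv]
        have hw := decayWeight_pos (t - u)
        have hw1 := decayWeight_le_one (t - u)
        have hu := decayWeight_pos u
        have h1 : ‖u‖⁻¹ * decayWeight (t - u) ≤
            16 * (‖u‖⁻¹ * decayWeight u) + decayWeight (t - u) := by
          rcases le_total ‖u‖ 1 with h | h
          · have : 1 ≤ 16 * decayWeight u := by
              unfold decayWeight
              rw [← div_eq_mul_inv, le_div_iff₀ (by positivity), one_mul]
              calc (1 + ‖u‖) ^ 4 ≤ (1 + 1) ^ 4 := by gcongr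
                _ = 16 := by norm_num
            have h2 : ‖u‖⁻¹ * decayWeight (t - u) ≤ ‖u‖⁻¹ * (16 * decayWeight u) := by
              gcongr; linarith
            linarith
          · have : ‖u‖⁻¹ ≤ 1 := inv_le_one_of_one_le₀ h
            have h2 : ‖u‖⁻¹ * decayWeight (t - u) ≤ 1 * decayWeight (t - u) := by gcongr
            have : 0 ≤ 16 * (‖u‖⁻¹ * decayWeight u) := by positivity
            linarith
        calc ‖u‖⁻¹ * ‖H (t - u)‖ ≤ ‖u‖⁻¹ * (C * decayWeight (t - u)) := by
              gcongr; exact hb _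
          _ = C * (‖u‖⁻¹ * decayWeight (t - u)) := by ring
          _ ≤ _ := by gcongr
    _ = _ := by
        rw [integral_const_mul, integral_add hi1 hi2, integral_const_mul,
          integral_sub_left_eq_self decayWeight volume t]

/-- Differentiation under the integral sign: after the substitution `u = t - ξ` the singular kernel
no longer depends on `t`. -/
lemma hasFDerivAt_cauchy {h : ℂ → ℂ} {h' : ℂ → ℂ →L[ℝ] ℂ} (hd : ∀ ξ, HasFDerivAt h (h' ξ) ξ)
    (hc : Continuous h') {C : ℝ} (hC : 0 ≤ C) (hb : ∀ ξ, ‖h ξ‖ ≤ C * decayWeight ξ)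
    (hb' : ∀ ξ, ‖h' ξ‖ ≤ C * decayWeight ξ) (t : ℂ) :
    HasFDerivAt (fun t => ∫ u : ℂ, u⁻¹ • h (t - u)) (∫ u : ℂ, u⁻¹ • h' (t - u)) t := by
  have hch : Continuous h := continuous_iff_continuousAt.2 fun x => (hd x).continuousAt
  refine hasFDerivAt_integral_of_dominated_of_fderiv_le
    (F' := fun x u => u⁻¹ • h' (x - u)) (Metric.ball_mem_nhds t one_pos)
    (Eventually.of_forall fun x => aestronglyMeasurable_inv_smul hch.aestronglyMeasurable x)
    (integrable_inv_smul hch.aestronglyMeasurable hC hb t)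
    (aestronglyMeasurable_inv_smul hc.aestronglyMeasurable t)
    (bound := fun u => C * (1 + (‖t‖ + 1)) ^ 4 * (‖u‖⁻¹ * decayWeight u))
    (Eventually.of_forall fun u x hx => norm_inv_smul_le hC hb' ?_ u)
    (integrable_inv_mul_decayWeight.const_mul _)
    (Eventually.of_forall fun u x _ => ?_)
  · have := norm_sub_norm_le x t
    rw [Metric.mem_ball, dist_eq_norm] at hx
    linarith
  · have h1 : HasFDerivAt (fun x => x - u) (ContinuousLinearMap.id ℝ ℂ) x :=
      (hasFDerivAt_id x).sub_const u
    have h2 := ((hd (x - u)).comp x h1).const_smul u⁻¹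
    rw [ContinuousLinearMap.comp_id] at h2
    exact h2

lemma continuous_cauchy {h' : ℂ → ℂ →L[ℝ] ℂ}
    (hc : Continuous h') {C : ℝ} (hC : 0 ≤ C)
    (hb' : ∀ ξ, ‖h' ξ‖ ≤ C * decayWeight ξ) :
    Continuous (fun t => ∫ u : ℂ, u⁻¹ • h' (t - u)) := by
  refine continuous_iff_continuousAt.2 fun t => ?_
  refine continuousAt_of_dominated
    (Eventually.of_forall fun x => aestronglyMeasurable_inv_smul hc.aestronglyMeasurable x)
    (bound := fun u => C * (1 + (‖t‖ + 1)) ^ 4 * (‖u‖⁻¹ * decayWeight u)) ?_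
    (integrable_inv_mul_decayWeight.const_mul _)
    (Eventually.of_forall fun u => ?_)
  · filter_upwards [Metric.ball_mem_nhds t one_pos] with x hx
    refine Eventually.of_forall fun u => norm_inv_smul_le hC hb' ?_ u
    have := norm_sub_norm_le x t
    rw [Metric.mem_ball, dist_eq_norm] at hx
    linarith
  · have : Continuous fun x : ℂ => u⁻¹ • h' (x - u) := by fun_prop
    exact this.continuousAt

/-! ### The Cauchy–Pompeiu formula -/

/-- The unit vector `e^{iθ}`. -/
def unitVec (θ : ℝ) : ℂ := Real.cos θ + Real.sin θ * Complex.I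

lemma norm_unitVec (θ : ℝ) : ‖unitVec θ‖ = 1 := by
  have := Complex.norm_exp_ofReal_mul_I θ
  rwa [Complex.exp_mul_I, ← Complex.ofReal_cos, ← Complex.ofReal_sin] at this

lemma continuous_unitVec : Continuous unitVec := by
  unfold unitVec
  fun_prop

lemma hasDerivAt_unitVec (θ : ℝ) : HasDerivAt unitVec (Complex.I * unitVec θ) θ := by
  have h1 := (Real.hasDerivAt_cos θ).ofReal_comp
  have h2 := (Real.hasDerivAt_sin θ).ofReal_comp.mul_const Complex.I
  refine (h1.add h2).congr_deriv ?_
  unfold unitVec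
  push_cast
  linear_combination -(Complex.sin θ) * Complex.I_sq

/-- The operator `∂̄` in a rotated orthonormal frame `(e, ie)` instead of `(1, i)`. -/
lemma unitVec_inv_mul (L : ℂ →L[ℝ] ℂ) (θ : ℝ) :
    (unitVec θ)⁻¹ * (L 1 + Complex.I * L Complex.I) =
      L (unitVec θ) + Complex.I * L (Complex.I * unitVec θ) := by
  have hinv : (unitVec θ)⁻¹ = Real.cos θ - Real.sin θ * Complex.I := by
    refine inv_eq_of_mul_eq_one_right ?_
    unfold unitVec
    have : (Real.cos θ : ℂ) ^ 2 + (Real.sin θ : ℂ) ^ 2 = 1 := by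
      exact_mod_cast Real.cos_sq_add_sin_sq θ
    linear_combination this - (Real.sin θ : ℂ) ^ 2 * Complex.I_sq
  have h1 : unitVec θ = Real.cos θ • (1 : ℂ) + Real.sin θ • Complex.I := by
    simp [unitVec]
  have h2 : Complex.I * unitVec θ = Real.cos θ • Complex.I - Real.sin θ • (1 : ℂ) := by
    simp only [unitVec, Complex.real_smul]
    linear_combination (Real.sin θ : ℂ) * Complex.I_sq
  rw [hinv, h2, h1, map_add, map_sub, map_smul, map_smul, map_smul, map_smul]
  simp only [Complex.real_smul]
  linear_combination -(Real.sin θ : ℂ) * L Complex.I * Complex.I_sq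

/-- The Cauchy–Pompeiu formula for a decaying `C¹` function on `ℂ`. In polar coordinates around
`t`, `∂̄h / u` splits into a radial derivative, which integrates to the value at `t`, and
an angular derivative, which integrates to zero over every circle. -/
lemma cauchy_pompeiu {h : ℂ → ℂ} {h' : ℂ → ℂ →L[ℝ] ℂ} (hd : ∀ ξ, HasFDerivAt h (h' ξ) ξ)
    (hc : Continuous h') {C : ℝ} (hC : 0 ≤ C) (hb : ∀ ξ, ‖h ξ‖ ≤ C * decayWeight ξ)
    (hb' : ∀ ξ, ‖h' ξ‖ ≤ C * decayWeight ξ) (t : ℂ) :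
    ∫ u : ℂ, u⁻¹ * wirtingerBar h' (t - u) = Real.pi * h t := by
  set μ : Measure ℝ := volume.restrict (Ioi 0) with hμ
  set ν : Measure ℝ := volume.restrict (Ioo (-Real.pi) Real.pi) with hν
  let R : ℝ × ℝ → ℂ := fun p => h' (t - p.1 * unitVec p.2) (unitVec p.2)
  let T : ℝ × ℝ → ℂ := fun p => h' (t - p.1 * unitVec p.2) (Complex.I * unitVec p.2)
  have hcu := continuous_unitVec
  have hcA : Continuous fun p : ℝ × ℝ => h' (t - p.1 * unitVec p.2) := by fun_prop
  have hcR : Continuous R := by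
    exact hcA.clm_apply (by fun_prop)
  have hcT : Continuous T := by
    exact hcA.clm_apply (by fun_prop)
  have hdom : Integrable (fun p : ℝ × ℝ => C * (1 + ‖t‖) ^ 4 * ((1 + ‖p.1‖) ^ 4)⁻¹)
      (μ.prod ν) := by
    have h1 : Integrable (fun r : ℝ => ((1 + ‖r‖) ^ 4)⁻¹) μ :=
      (integrable_one_add_norm_pow_four (E := ℝ) volume (by simp)).integrableOn
    have : IsFiniteMeasure ν := ⟨by simp [hν]⟩
    exact (h1.comp_fst ν).const_mul _
  have hbd : ∀ (p : ℝ × ℝ) (v : ℂ), ‖v‖ = 1 →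
      ‖h' (t - p.1 * unitVec p.2) v‖ ≤ C * (1 + ‖t‖) ^ 4 * ((1 + ‖p.1‖) ^ 4)⁻¹ := by
    intro p v hv
    have h1 := (h' (t - p.1 * unitVec p.2)).le_opNorm v
    rw [hv, mul_one] at h1
    have h2 := decayWeight_sub_le t (p.1 * unitVec p.2)
    have h3 : decayWeight (p.1 * unitVec p.2) = ((1 + ‖p.1‖) ^ 4)⁻¹ := by
      simp [decayWeight, norm_unitVec]
    rw [h3] at h2
    calc _ ≤ C * ((1 + ‖t‖) ^ 4 * ((1 + ‖p.1‖) ^ 4)⁻¹) :=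
          h1.trans ((hb' _).trans (by gcongr))
      _ = _ := by ring
  have hR : Integrable R (μ.prod ν) := hdom.mono' hcR.aestronglyMeasurable
    (Eventually.of_forall fun p => hbd p _ (norm_unitVec _))
  have hT : Integrable T (μ.prod ν) := hdom.mono' hcT.aestronglyMeasurable
    (Eventually.of_forall fun p => hbd p _ (by simp [norm_unitVec]))
  have hradial : ∀ θ : ℝ, ∫ r, R (r, θ) ∂μ = h t := by
    intro θ
    have hder : ∀ r : ℝ, HasDerivAt (fun r : ℝ => -h (t - r * unitVec θ)) (R (r, θ)) r := by
      intro r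
      have h1 : HasDerivAt (fun r : ℝ => t - r * unitVec θ) (-unitVec θ) r := by
        have := ((hasDerivAt_id r).ofReal_comp.mul_const (unitVec θ)).const_sub t
        simpa using this
      have h2 := ((hd (t - r * unitVec θ)).comp_hasDerivAt r h1).neg
      refine h2.congr_deriv ?_
      simp [R]
    have hint : IntegrableOn (fun r => R (r, θ)) (Ioi 0) := by
      refine (((integrable_one_add_norm_pow_four (E := ℝ) volume (by simp)).const_mul
        (C * (1 + ‖t‖) ^ 4)).integrableOn).mono'
        (Continuous.aestronglyMeasurable (by fun_prop))
        (Eventually.of_forall fun r => hbd (r, θ) _ (norm_unitVec _))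
    have hlim : Tendsto (fun r : ℝ => -h (t - r * unitVec θ)) atTop (𝓝 0) := by
      rw [tendsto_zero_iff_norm_tendsto_zero]
      have hz : Tendsto (fun r : ℝ => C * (1 + ‖t‖) ^ 4 * ((1 + r) ^ 4)⁻¹) atTop (𝓝 0) := by
        have h1 : Tendsto (fun r : ℝ => ((1 + r) ^ 4)⁻¹) atTop (𝓝 0) :=
          tendsto_inv_atTop_zero.comp ((tendsto_pow_atTop (by norm_num)).comp
            (tendsto_atTop_add_const_left _ _ tendsto_id))
        simpa using h1.const_mul (C * (1 + ‖t‖) ^ 4)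
      refine squeeze_zero' (Eventually.of_forall fun _ => norm_nonneg _) ?_ hz
      filter_upwards [eventually_ge_atTop 0] with r hr
      have h2 := decayWeight_sub_le t (r * unitVec θ)
      have h3 : decayWeight (r * unitVec θ) = ((1 + r) ^ 4)⁻¹ := by
        simp [decayWeight, norm_unitVec, abs_of_nonneg hr]
      rw [h3] at h2
      rw [norm_neg]
      calc _ ≤ C * ((1 + ‖t‖) ^ 4 * ((1 + r) ^ 4)⁻¹) := (hb _).trans (by gcongr)
        _ = _ := by ring
    have := integral_Ioi_of_hasDerivAt_of_tendsto (hder 0).continuousAt.continuousWithinAt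
      (fun r _ => hder r) hint hlim
    simpa using this
  have hangular : ∀ r ∈ Ioi (0 : ℝ), ∫ θ, T (r, θ) ∂ν = 0 := by
    intro r hr
    have hr0 : (r : ℂ) ≠ 0 := by exact_mod_cast (ne_of_gt hr)
    have hder : ∀ θ : ℝ, HasDerivAt (fun θ : ℝ => -(r : ℂ)⁻¹ * h (t - r * unitVec θ))
        (T (r, θ)) θ := by
      intro θ
      have h1 : HasDerivAt (fun θ : ℝ => t - r * unitVec θ)
          (-(r * (Complex.I * unitVec θ))) θ :=
        ((hasDerivAt_unitVec θ).const_mul (r : ℂ)).const_sub t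
      have h2 := ((hd (t - r * unitVec θ)).comp_hasDerivAt θ h1).const_mul (-(r : ℂ)⁻¹)
      refine h2.congr_deriv ?_
      have h3 : h' (t - r * unitVec θ) (r * (Complex.I * unitVec θ)) = r * T (r, θ) := by
        rw [← Complex.real_smul (x := r) (z := Complex.I * unitVec θ), map_smul,
          Complex.real_smul]
      rw [map_neg, h3]
      field_simp
    rw [hν, ← integral_Ioc_eq_integral_Ioo,
      ← intervalIntegral.integral_of_le (by linarith [Real.pi_pos]),
      intervalIntegral.integral_eq_sub_of_hasDerivAt (fun θ _ => hder θ)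
        (Continuous.intervalIntegrable (by fun_prop) _ _)]
    simp [unitVec]
  have hprod : (volume : Measure (ℝ × ℝ)).restrict polarCoord.target = μ.prod ν := by
    rw [hμ, hν, Measure.prod_restrict, ← Measure.volume_eq_prod]
    rfl
  rw [← Complex.integral_comp_polarCoord_symm]
  have hcongr : ∫ p in polarCoord.target, p.1 • ((Complex.polarCoord.symm p)⁻¹ *
        wirtingerBar h' (t - Complex.polarCoord.symm p)) =
      ∫ p in polarCoord.target, (1 / 2 : ℂ) * (R p + Complex.I * T p) := by
    refine setIntegral_congr_fun polarCoord.open_target.measurableSet fun p hp => ?_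
    have hp0 : (p.1 : ℂ) ≠ 0 := by
      have : 0 < p.1 := hp.1
      exact_mod_cast this.ne'
    have hs : Complex.polarCoord.symm p = p.1 * unitVec p.2 := Complex.polarCoord_symm_apply p
    simp only [hs, wirtingerBar, R, T]
    rw [← unitVec_inv_mul, Complex.real_smul, mul_inv]
    field_simp
  rw [hcongr, hprod, integral_const_mul, integral_add hR (hT.const_mul _), integral_const_mul,
    integral_prod_symm R hR, integral_prod T hT]
  have h1 : ∫ r, ∫ θ, T (r, θ) ∂ν ∂μ = 0 := by
    rw [hμ, setIntegral_congr_fun measurableSet_Ioi hangular]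
    simp
  simp only [hradial, h1, integral_const]
  have h2 : ν.real univ = 2 * Real.pi := by
    simp only [hν, measureReal_restrict_apply_univ, Real.volume_real_Ioo]
    rw [max_eq_left] <;> linarith [Real.pi_pos]
  rw [h2, Complex.real_smul]
  push_cast
  ring

/-! ### The Mellin densities of a function of rapid decay -/

/-- The integrand `ξⁿ f(ξ) |ξ|⁻²` of the `n`-th Mellin moment; it vanishes at `ξ = 0`, whatever
the value `f 0`. -/
def mellinDensity (f : ℂ → ℂ) (n : ℤ) (ξ : ℂ) : ℂ := ξ ^ n * f ξ * ((‖ξ‖ ^ 2 : ℝ) : ℂ)⁻¹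

/-- The real derivative of `f(ξ) |ξ|⁻²`. The conventions for `0⁻¹` make it vanish at `ξ = 0`,
which is the correct value there for `f` of rapid decay. -/
def mellinDensityDeriv (f : ℂ → ℂ) (f' : ℂ → ℂ →L[ℝ] ℂ) (ξ : ℂ) : ℂ →L[ℝ] ℂ :=
  (‖ξ‖ ^ 2)⁻¹ • f' ξ + ((-((‖ξ‖ ^ 2) ^ 2)⁻¹) • (2 • innerSL ℝ ξ)).smulRight (f ξ)

/-- Rapid decay at `0` and at `∞` in a single estimate. -/
lemma HasRapidDecayDeriv.exists_bound {f : ℂ → ℂ} {f' : ℂ → ℂ →L[ℝ] ℂ}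
    (hf : HasRapidDecayDeriv f f') (a b : ℕ) :
    ∃ C : ℝ, 0 < C ∧ ∀ ξ : ℂ, ξ ≠ 0 → ‖f ξ‖ ≤ C * ‖ξ‖ ^ a * ((1 + ‖ξ‖) ^ b)⁻¹ ∧
      ‖f' ξ‖ ≤ C * ‖ξ‖ ^ a * ((1 + ‖ξ‖) ^ b)⁻¹ := by
  obtain ⟨C₁, hC₁, h₁, -⟩ := hf.2.2 a
  obtain ⟨C₂, hC₂, -, h₂⟩ := hf.2.2 b
  refine ⟨(C₁ + C₂) * 2 ^ b, by positivity, fun ξ hξ => ?_⟩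
  have hr : 0 < ‖ξ‖ := norm_pos_iff.2 hξ
  rcases le_total ‖ξ‖ 1 with h | h
  · have key : C₁ * ‖ξ‖ ^ a ≤ (C₁ + C₂) * 2 ^ b * ‖ξ‖ ^ a * ((1 + ‖ξ‖) ^ b)⁻¹ := by
      rw [← div_eq_mul_inv, le_div_iff₀ (by positivity)]
      calc C₁ * ‖ξ‖ ^ a * (1 + ‖ξ‖) ^ b ≤ (C₁ + C₂) * ‖ξ‖ ^ a * 2 ^ b := by
            gcongr <;> linarith
        _ = _ := by ring
    exact ⟨(h₁ ξ hξ h).1.trans key, (h₁ ξ hξ h).2.trans key⟩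
  · have key : C₂ * ‖ξ‖⁻¹ ^ b ≤ (C₁ + C₂) * 2 ^ b * ‖ξ‖ ^ a * ((1 + ‖ξ‖) ^ b)⁻¹ := by
      rw [← div_eq_mul_inv, le_div_iff₀ (by positivity), mul_assoc, ← mul_pow]
      have h3 : ‖ξ‖⁻¹ * (1 + ‖ξ‖) ≤ 2 := by
        rw [inv_mul_le_iff₀ hr]; linarith
      have h4 : 1 ≤ ‖ξ‖ ^ a := one_le_pow₀ h
      calc C₂ * (‖ξ‖⁻¹ * (1 + ‖ξ‖)) ^ b ≤ (C₁ + C₂) * 2 ^ b * 1 := by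
            rw [mul_one]; gcongr; linarith
        _ ≤ _ := by gcongr
    exact ⟨(h₂ ξ h).1.trans key, (h₂ ξ h).2.trans key⟩

lemma mellinDensity_at_zero (f : ℂ → ℂ) (n : ℤ) : mellinDensity f n 0 = 0 := by
  simp [mellinDensity]

lemma mellinDensity_succ (f : ℂ → ℂ) (n : ℤ) (ξ : ℂ) :
    mellinDensity f (n + 1) ξ = ξ * mellinDensity f n ξ := by
  rcases eq_or_ne ξ 0 with rfl | h
  · simp [mellinDensity_at_zero]
  · simp only [mellinDensity, zpow_add_one₀ h]
    ring

lemma mellinDensity_zero_index (f : ℂ → ℂ) (ξ : ℂ) :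
    mellinDensity f 0 ξ = (‖ξ‖ ^ 2)⁻¹ • f ξ := by
  simp [mellinDensity, Complex.real_smul, mul_comm]

lemma exists_mellinDensity_le {f : ℂ → ℂ} {f' : ℂ → ℂ →L[ℝ] ℂ}
    (hf : HasRapidDecayDeriv f f') (n : ℤ) :
    ∃ C : ℝ, 0 ≤ C ∧ ∀ ξ, ‖mellinDensity f n ξ‖ ≤ C * decayWeight ξ := by
  obtain ⟨m, rfl⟩ : ∃ m, n = m + 2 := ⟨n - 2, by ring⟩
  -- The power `‖ξ‖ ^ |m|` absorbs `‖ξ‖ ^ m` at `0`, and `(1 + ‖ξ‖) ^ (2 |m|)` absorbs both at `∞`.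
  obtain ⟨C, hC, hb⟩ := hf.exists_bound m.natAbs (2 * m.natAbs + 4)
  refine ⟨C, hC.le, fun ξ => ?_⟩
  rcases eq_or_ne ξ 0 with rfl | hξ
  · rw [mellinDensity_at_zero, norm_zero]
    exact mul_nonneg hC.le (decayWeight_pos 0).le
  have hr : 0 < ‖ξ‖ := norm_pos_iff.2 hξ
  have h1 : ‖mellinDensity f (m + 2) ξ‖ = ‖ξ‖ ^ m * ‖f ξ‖ := by
    simp only [mellinDensity, norm_mul, norm_zpow, norm_inv, Complex.norm_real, norm_pow,
      norm_norm]
    rw [zpow_add₀ hr.ne']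
    have : ‖ξ‖ ^ (2 : ℤ) = ‖ξ‖ ^ 2 := by norm_cast
    rw [this]
    field_simp
  have h2 : ‖ξ‖ ^ m * ‖ξ‖ ^ m.natAbs ≤ (1 + ‖ξ‖) ^ (2 * m.natAbs) := by
    rcases le_total 0 m with h | h
    · have : ‖ξ‖ ^ m = ‖ξ‖ ^ m.natAbs := by
        rw [← zpow_natCast, Int.natAbs_of_nonneg h]
      rw [this, ← pow_add, ← two_mul]
      gcongr
      linarith
    · have : ‖ξ‖ ^ m = (‖ξ‖ ^ m.natAbs)⁻¹ := by
        rw [← zpow_natCast, ← zpow_neg, Int.ofNat_natAbs_of_nonpos h, neg_neg]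
      rw [this, inv_mul_cancel₀ (by positivity)]
      exact one_le_pow₀ (by linarith)
  rw [h1]
  calc ‖ξ‖ ^ m * ‖f ξ‖ ≤ ‖ξ‖ ^ m * (C * ‖ξ‖ ^ m.natAbs * ((1 + ‖ξ‖) ^ (2 * m.natAbs + 4))⁻¹) := by
        gcongr; exact (hb ξ hξ).1
    _ = C * (‖ξ‖ ^ m * ‖ξ‖ ^ m.natAbs) * ((1 + ‖ξ‖) ^ (2 * m.natAbs + 4))⁻¹ := by ring
    _ ≤ C * (1 + ‖ξ‖) ^ (2 * m.natAbs) * ((1 + ‖ξ‖) ^ (2 * m.natAbs + 4))⁻¹ := by gcongr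
    _ = C * decayWeight ξ := by
        unfold decayWeight
        rw [pow_add]
        field_simp

lemma aestronglyMeasurable_mellinDensity {f : ℂ → ℂ} (hf : ContinuousOn f {0}ᶜ) (n : ℤ) :
    AEStronglyMeasurable (mellinDensity f n) volume := by
  have h1 : ContinuousOn (mellinDensity f n) {0}ᶜ := by
    intro ξ hξ
    have hξ' : ξ ≠ 0 := hξ
    have h2 : ((‖ξ‖ ^ 2 : ℝ) : ℂ) ≠ 0 := by
      simpa using hξ'
    have h3 : ContinuousAt (fun ξ : ℂ => ((‖ξ‖ ^ 2 : ℝ) : ℂ)⁻¹) ξ :=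
      ContinuousAt.inv₀ (by fun_prop) h2
    exact ((continuousAt_zpow₀ ξ n (Or.inl hξ')).continuousWithinAt.mul (hf ξ hξ)).mul
      h3.continuousWithinAt
  have h2 := h1.aestronglyMeasurable (μ := volume) (measurableSet_singleton (0 : ℂ)).compl
  rwa [restrict_compl_singleton] at h2

lemma mellinDensityDeriv_at_zero (f : ℂ → ℂ) (f' : ℂ → ℂ →L[ℝ] ℂ) :
    mellinDensityDeriv f f' 0 = 0 := by
  ext
  simp [mellinDensityDeriv]

lemma exists_mellinDensityDeriv_le {f : ℂ → ℂ} {f' : ℂ → ℂ →L[ℝ] ℂ}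
    (hf : HasRapidDecayDeriv f f') :
    ∃ C : ℝ, 0 ≤ C ∧ ∀ ξ, ‖mellinDensityDeriv f f' ξ‖ ≤ C * decayWeight ξ ∧
      ‖mellinDensityDeriv f f' ξ‖ ≤ C * ‖ξ‖ := by
  obtain ⟨C, hC, hb⟩ := hf.exists_bound 4 6
  refine ⟨2 * C, by positivity, fun ξ => ?_⟩
  rcases eq_or_ne ξ 0 with rfl | hξ
  · simp only [mellinDensityDeriv_at_zero, norm_zero, mul_zero, le_refl, and_true]
    exact mul_nonneg (by positivity) (decayWeight_pos 0).le
  obtain ⟨h1, h2⟩ := hb ξ hξ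
  have hr : 0 < ‖ξ‖ := norm_pos_iff.2 hξ
  set r := ‖ξ‖ with hrdef
  have h3 : ‖mellinDensityDeriv f f' ξ‖ ≤ (r ^ 2)⁻¹ * ‖f' ξ‖ + (r ^ 4)⁻¹ * (2 * r) * ‖f ξ‖ := by
    unfold mellinDensityDeriv
    refine (norm_add_le _ _).trans (add_le_add ?_ ?_)
    · rw [norm_smul, norm_inv, norm_pow, norm_norm]
    · rw [ContinuousLinearMap.norm_smulRight_apply, norm_smul, norm_neg, norm_inv, norm_pow,
        norm_pow, norm_norm, ← pow_mul]
      gcongr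
      rw [two_smul, two_mul]
      refine (norm_add_le _ _).trans ?_
      rw [innerSL_apply_norm]
  have h4 : ‖mellinDensityDeriv f f' ξ‖ ≤ 2 * C * r * ((1 + r) ^ 5)⁻¹ := by
    refine h3.trans ?_
    calc (r ^ 2)⁻¹ * ‖f' ξ‖ + (r ^ 4)⁻¹ * (2 * r) * ‖f ξ‖
        ≤ (r ^ 2)⁻¹ * (C * r ^ 4 * ((1 + r) ^ 6)⁻¹) +
          (r ^ 4)⁻¹ * (2 * r) * (C * r ^ 4 * ((1 + r) ^ 6)⁻¹) := by gcongr
      _ = C * r * (r + 2) * ((1 + r) ^ 6)⁻¹ := by field_simp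
      _ ≤ C * r * (2 * (1 + r)) * ((1 + r) ^ 6)⁻¹ := by gcongr; linarith
      _ = _ := by field_simp
  constructor
  · refine h4.trans ?_
    unfold decayWeight
    rw [← hrdef]
    calc 2 * C * r * ((1 + r) ^ 5)⁻¹ ≤ 2 * C * (1 + r) * ((1 + r) ^ 5)⁻¹ := by gcongr; linarith
      _ = _ := by field_simp
  · refine h4.trans (mul_le_of_le_one_right (by positivity) ?_)
    exact inv_le_one_of_one_le₀ (one_le_pow₀ (by linarith))

lemma hasFDerivAt_mellinDensity {f : ℂ → ℂ} {f' : ℂ → ℂ →L[ℝ] ℂ}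
    (hf : HasRapidDecayDeriv f f') (ξ : ℂ) :
    HasFDerivAt (mellinDensity f 0) (mellinDensityDeriv f f' ξ) ξ := by
  rcases eq_or_ne ξ 0 with rfl | hξ
  · rw [mellinDensityDeriv_at_zero]
    obtain ⟨C, hC, hb⟩ := hf.exists_bound 4 0
    have hO : mellinDensity f 0 =O[𝓝 0] fun x => ‖x - 0‖ ^ 2 := by
      refine Asymptotics.IsBigO.of_bound C (Eventually.of_forall fun x => ?_)
      rcases eq_or_ne x 0 with rfl | hx
      · simp [mellinDensity_at_zero]
      have hr : 0 < ‖x‖ := norm_pos_iff.2 hx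
      have h1 := (hb x hx).1
      rw [mellinDensity_zero_index, norm_smul, norm_inv, norm_pow, norm_norm, sub_zero,
        norm_pow, norm_norm]
      rw [inv_mul_le_iff₀ (by positivity)]
      simp only [pow_zero, inv_one, mul_one] at h1
      calc _ ≤ _ := h1
        _ = _ := by ring
    exact hO.hasFDerivAt (by norm_num)
  · have h1 : HasFDerivAt (fun x : ℂ => ‖x‖ ^ 2) (2 • innerSL ℝ ξ) ξ := by
      simpa using (hasFDerivAt_id (𝕜 := ℝ) ξ).norm_sq
    have h2 : ‖ξ‖ ^ 2 ≠ 0 := by simpa using hξ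
    have h3 := (hasDerivAt_inv h2).comp_hasFDerivAt ξ h1
    have h4 := h3.smul (hf.1 ξ hξ)
    have h5 : mellinDensity f 0 = ((fun y : ℝ => y⁻¹) ∘ fun x : ℂ => ‖x‖ ^ 2) • f := by
      ext x
      simp [mellinDensity_zero_index]
    rw [h5]
    exact h4

lemma continuous_mellinDensityDeriv {f : ℂ → ℂ} {f' : ℂ → ℂ →L[ℝ] ℂ}
    (hf : HasRapidDecayDeriv f f') : Continuous (mellinDensityDeriv f f') := by
  refine continuous_iff_continuousAt.2 fun ξ => ?_
  rcases eq_or_ne ξ 0 with rfl | hξ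
  · obtain ⟨C, hC, hb⟩ := exists_mellinDensityDeriv_le hf
    rw [ContinuousAt, mellinDensityDeriv_at_zero]
    refine squeeze_zero_norm (fun x => (hb x).2) ?_
    have : Continuous fun x : ℂ => C * ‖x‖ := by fun_prop
    simpa using this.tendsto 0
  · have h2 : ‖ξ‖ ^ 2 ≠ 0 := by simpa using hξ
    have hf1 : ContinuousAt f ξ := (hf.1 ξ hξ).continuousAt
    have hf2 : ContinuousAt f' ξ := hf.2.1.continuousAt (isOpen_compl_singleton.mem_nhds hξ)
    have h3 : ContinuousAt (fun x : ℂ => (‖x‖ ^ 2)⁻¹) ξ := ContinuousAt.inv₀ (by fun_prop) h2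
    have h4 : ContinuousAt (fun x : ℂ => ((‖x‖ ^ 2) ^ 2)⁻¹) ξ :=
      ContinuousAt.inv₀ (by fun_prop) (pow_ne_zero 2 h2)
    have h5 : ContinuousAt (fun x : ℂ => (-((‖x‖ ^ 2) ^ 2)⁻¹) • (2 • innerSL ℝ x)) ξ :=
      h4.neg.smul ((innerSL ℝ (E := ℂ)).continuous.continuousAt.const_smul 2)
    have h6 : ContinuousAt (fun x : ℂ =>
        ContinuousLinearMap.smulRightL ℝ ℂ ℂ ((-((‖x‖ ^ 2) ^ 2)⁻¹) • (2 • innerSL ℝ x)) (f x)) ξ :=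
      ((ContinuousLinearMap.continuous _).continuousAt.comp h5).clm_apply hf1
    exact (h3.smul hf2).add h6

/-! ### Cauchy transforms of the Mellin densities -/

/-- The Cauchy transform of `ξⁿ f(ξ) |ξ|⁻²`, up to the factor `1/π`. -/
def cauchyMoment (f : ℂ → ℂ) (n : ℤ) (t : ℂ) : ℂ :=
  ∫ u : ℂ, u⁻¹ • mellinDensity f n (t - u)

lemma melKer_eq (f : ℂ → ℂ) {t : ℂ} (ht : t ≠ 0) :
    melKer f t = (-1 / (Real.pi : ℂ)) * (t * cauchyMoment f 0 t) := by
  unfold melKer cauchyMoment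
  congr 1
  rw [← integral_const_mul, ← integral_sub_left_eq_self _ volume t]
  refine integral_congr_ae (Eventually.of_forall fun u => ?_)
  -- This holds at `u = 0` too, where both sides are `0` by convention.
  have h : (1 - (t - u) / t)⁻¹ = t * u⁻¹ := by
    rw [sub_div, div_self ht, sub_sub_cancel, inv_div, div_eq_mul_inv]
  simp only [h, mellinDensity, zpow_zero, smul_eq_mul]
  ring

/-- Writing one factor `ξ` as `t - u`, the `u` cancels the kernel and leaves a vanishing moment. -/
lemma cauchyMoment_succ {f : ℂ → ℂ} {f' : ℂ → ℂ →L[ℝ] ℂ} (hf : HasRapidDecayDeriv f f')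
    (hmom : ∀ k : ℤ, ∫ ξ : ℂ, mellinDensity f k ξ = 0) (n : ℤ) (t : ℂ) :
    cauchyMoment f (n + 1) t = t * cauchyMoment f n t := by
  obtain ⟨C, hC, hb⟩ := exists_mellinDensity_le hf n
  have hfc : ContinuousOn f {0}ᶜ := fun ξ hξ => (hf.1 ξ hξ).continuousAt.continuousWithinAt
  have hm := aestronglyMeasurable_mellinDensity hfc n
  have hi : Integrable (mellinDensity f n) :=
    (integrable_decayWeight.const_mul C).mono' hm (Eventually.of_forall hb)
  have h1 : cauchyMoment f (n + 1) t =
      ∫ u : ℂ, (t * (u⁻¹ • mellinDensity f n (t - u)) - mellinDensity f n (t - u)) := by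
    unfold cauchyMoment
    refine integral_congr_ae ?_
    filter_upwards [compl_mem_ae_iff.2 (measure_singleton (0 : ℂ))] with u hu
    have hu' : u ≠ 0 := hu
    rw [mellinDensity_succ, smul_eq_mul, smul_eq_mul]
    field_simp
  rw [h1, integral_sub ((integrable_inv_smul hm hC hb t).const_mul t) (hi.comp_sub_left t),
    integral_sub_left_eq_self _ volume t, hmom, sub_zero, integral_const_mul]
  rfl

lemma cauchyMoment_eq {f : ℂ → ℂ} {f' : ℂ → ℂ →L[ℝ] ℂ} (hf : HasRapidDecayDeriv f f')
    (hmom : ∀ k : ℤ, ∫ ξ : ℂ, mellinDensity f k ξ = 0) (n : ℤ) {t : ℂ} (ht : t ≠ 0) :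
    cauchyMoment f n t = t ^ n * cauchyMoment f 0 t := by
  induction n with
  | zero => simp
  | succ i ih => rw [cauchyMoment_succ hf hmom, ih, zpow_add_one₀ ht]; ring
  | pred i ih =>
    have h := cauchyMoment_succ hf hmom (-(i : ℤ) - 1) t
    rw [sub_add_cancel, ih] at h
    rw [zpow_sub_one₀ ht]
    field_simp
    rw [mul_comm, ← h, mul_comm]

/-- Every integer power of `t` bounds `melKer f`: the freedom in `n` comes from writing the transform
as `t ^ (1 - n)` times the bounded function `cauchyMoment f n`. -/
lemma exists_melKer_le {f : ℂ → ℂ} {f' : ℂ → ℂ →L[ℝ] ℂ} (hf : HasRapidDecayDeriv f f')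
    (hmom : ∀ k : ℤ, ∫ ξ : ℂ, mellinDensity f k ξ = 0) (n : ℤ) :
    ∃ K : ℝ, 0 ≤ K ∧ ∀ t : ℂ, t ≠ 0 → ‖melKer f t‖ ≤ K * ‖t‖ ^ (1 - n) := by
  obtain ⟨C, hC, hb⟩ := exists_mellinDensity_le hf n
  obtain ⟨K, hK⟩ := exists_norm_integral_inv_smul_le hC hb
  have hK0 : 0 ≤ K := (norm_nonneg _).trans (hK 0)
  refine ⟨Real.pi⁻¹ * K, by positivity, fun t ht => ?_⟩
  have hr : 0 < ‖t‖ := norm_pos_iff.2 ht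
  have h1 : melKer f t = (-1 / (Real.pi : ℂ)) * (t ^ (1 - n) * cauchyMoment f n t) := by
    rw [melKer_eq f ht, cauchyMoment_eq hf hmom n ht, ← mul_assoc (t ^ (1 - n)),
      ← zpow_add₀ ht, sub_add_cancel, zpow_one]
  rw [h1, norm_mul, norm_mul, norm_div, norm_neg, norm_one, Complex.norm_real,
    Real.norm_of_nonneg Real.pi_pos.le, norm_zpow, one_div]
  calc Real.pi⁻¹ * (‖t‖ ^ (1 - n) * ‖cauchyMoment f n t‖) ≤ Real.pi⁻¹ * (‖t‖ ^ (1 - n) * K) := by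
        gcongr; exact hK t
    _ = _ := by ring

/-! ### The solution of the twisted `∂̄`-equation -/

theorem stmt_17 (f : ℂ → ℂ) (f' : ℂ → ℂ →L[ℝ] ℂ) (hf : HasRapidDecayDeriv f f')
    (hmom : ∀ k : ℤ, ∫ ξ : ℂ, ξ ^ k * f ξ * ((‖ξ‖ ^ 2 : ℝ) : ℂ)⁻¹ = 0) :
    ∃ (g : ℂ → ℂ) (g' : ℂ → ℂ →L[ℝ] ℂ),
      (∀ t : ℂ, t ≠ 0 → HasFDerivAt g (g' t) t) ∧
      ContinuousOn g' {0}ᶜ ∧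
      HasRapidDecay g ∧
      (∀ t : ℂ, t ≠ 0 → -(starRingEnd ℂ t) * wirtingerBar g' t = f t) ∧
      (∀ t : ℂ, t ≠ 0 → g t = melKer f t) := by
  obtain ⟨C₁, hC₁, hb₁⟩ := exists_mellinDensity_le hf 0
  obtain ⟨C₂, hC₂, hb₂⟩ := exists_mellinDensityDeriv_le hf
  -- A common constant for the density and its derivative.
  have hC : 0 ≤ C₁ + C₂ := add_nonneg hC₁ hC₂
  have hb : ∀ ξ, ‖mellinDensity f 0 ξ‖ ≤ (C₁ + C₂) * decayWeight ξ := fun ξ =>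
    (hb₁ ξ).trans (mul_le_mul_of_nonneg_right (by linarith) (decayWeight_pos ξ).le)
  have hb' : ∀ ξ, ‖mellinDensityDeriv f f' ξ‖ ≤ (C₁ + C₂) * decayWeight ξ := fun ξ =>
    (hb₂ ξ).1.trans (mul_le_mul_of_nonneg_right (by linarith) (decayWeight_pos ξ).le)
  have hd := hasFDerivAt_mellinDensity hf
  have hc := continuous_mellinDensityDeriv hf
  have hmom' : ∀ k : ℤ, ∫ ξ : ℂ, mellinDensity f k ξ = 0 := hmom
  let G' : ℂ → ℂ →L[ℝ] ℂ := fun t => ∫ u : ℂ, u⁻¹ • mellinDensityDeriv f f' (t - u)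
  have hG : ∀ t, HasFDerivAt (cauchyMoment f 0) (G' t) t :=
    hasFDerivAt_cauchy hd hc hC hb hb'
  have hG'c : Continuous G' := continuous_cauchy hc hC hb'
  have hGc : Continuous (cauchyMoment f 0) :=
    continuous_iff_continuousAt.2 fun t => (hG t).continuousAt
  let g : ℂ → ℂ := fun t => (-1 / (Real.pi : ℂ)) * (t * cauchyMoment f 0 t)
  let g' : ℂ → ℂ →L[ℝ] ℂ := fun t => (-1 / (Real.pi : ℂ)) •
    (t • G' t + cauchyMoment f 0 t • ContinuousLinearMap.id ℝ ℂ)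
  have hg : ∀ t, HasFDerivAt g (g' t) t := fun t =>
    ((hasFDerivAt_id (𝕜 := ℝ) t).mul (hG t)).const_smul (-1 / (Real.pi : ℂ))
  have hgm : ∀ t : ℂ, t ≠ 0 → g t = melKer f t := fun t ht => (melKer_eq f ht).symm
  have hpi : (Real.pi : ℂ) ≠ 0 := by exact_mod_cast Real.pi_pos.ne'
  have hG'w : ∀ t, wirtingerBar G' t = Real.pi * mellinDensity f 0 t := by
    intro t
    have hi := integrable_inv_smul hc.aestronglyMeasurable hC hb' t
    rw [← cauchy_pompeiu hd hc hC hb hb' t]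
    simp only [wirtingerBar, G']
    rw [ContinuousLinearMap.integral_apply hi, ContinuousLinearMap.integral_apply hi,
      ← integral_const_mul, ← integral_add, ← integral_const_mul]
    · refine integral_congr_ae (Eventually.of_forall fun u => ?_)
      simp only [smul_apply, smul_eq_mul]
      ring
    · exact hi.apply_continuousLinearMap 1
    · exact (hi.apply_continuousLinearMap Complex.I).const_mul _
  refine ⟨g, g', fun t _ => hg t, ?_, ⟨?_, fun N => ?_⟩, fun t ht => ?_, hgm⟩
  · refine Continuous.continuousOn ?_
    have h : Continuous fun t : ℂ =>
        t • G' t + cauchyMoment f 0 t • ContinuousLinearMap.id ℝ ℂ :=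
      (continuous_id.smul hG'c).add (hGc.smul continuous_const)
    exact h.const_smul (-1 / (Real.pi : ℂ))
  · exact fun t _ => (hg t).continuousAt.continuousWithinAt
  · -- The twists `n = 1 - N` and `n = 1 + N` give the powers `‖t‖ ^ N` and `‖t‖ ^ (-N)`.
    obtain ⟨K₁, hK₁, h₁⟩ := exists_melKer_le hf hmom' (1 - N)
    obtain ⟨K₂, hK₂, h₂⟩ := exists_melKer_le hf hmom' (1 + N)
    refine ⟨K₁ + K₂ + 1, by positivity, fun t ht _ => ?_, fun t ht => ?_⟩
    · rw [hgm t ht]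
      refine (h₁ t ht).trans ?_
      rw [sub_sub_cancel, zpow_natCast]
      gcongr
      linarith
    · have ht0 : t ≠ 0 := by
        rintro rfl
        norm_num at ht
      rw [hgm t ht0]
      refine (h₂ t ht0).trans ?_
      rw [show (1 - (1 + N) : ℤ) = -N by ring, zpow_neg, zpow_natCast, inv_pow]
      gcongr
      linarith
  · have h1 : wirtingerBar g' t = -t * mellinDensity f 0 t := by
      have h2 : wirtingerBar g' t = (-1 / (Real.pi : ℂ)) * (t * wirtingerBar G' t) := by
        simp only [wirtingerBar, g', smul_apply,
          add_apply, ContinuousLinearMap.id_apply, smul_eq_mul]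
        linear_combination (1 / 2 : ℂ) * (-1 / (Real.pi : ℂ)) * cauchyMoment f 0 t * Complex.I_sq
      rw [h2, hG'w]
      field_simp
    have h3 : starRingEnd ℂ t * t = ((‖t‖ ^ 2 : ℝ) : ℂ) := by
      rw [Complex.conj_mul']
      push_cast
      rfl
    have h4 : ((‖t‖ ^ 2 : ℝ) : ℂ) ≠ 0 := by simpa using ht
    rw [h1, mellinDensity, zpow_zero, one_mul]
    calc _ = (starRingEnd ℂ t * t) * f t * ((‖t‖ ^ 2 : ℝ) : ℂ)⁻¹ := by ring
      _ = f t := by rw [h3]; field_simp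
end
end
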